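/- arXiv:2502.00526 — 5 statements merged into one kernel-verified Lean document; each statement's English description precedes it below -/
import Mathlib

section
/- Let m < 0 be a squarefree integer. If the class number of the imaginary quadratic field ℚ(√m) is odd, then m = −1, m = −2, or m = −q for some prime q ≡ 3 (mod 4). -/
open NumberField

/-!
If an ideal `I` of the ring of integers of `K = ℚ(√m)` satisfies `I ^ 2 = (c)`, then `I` is
principal because the class number is odd. A generator of `I` has norm `c`, and four times a norm
has the form `x ^ 2 - m * y ^ 2`, so `x ^ 2 - m * y ^ 2 = 4 * c` is solvable in integers. Ramified
primes provide such ideals: `(a, √m) ^ 2 = (a)` whenever `m = -(a * b)` is squarefree, and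
`(2, 1 + √m) ^ 2 = (2)` whenever `m ≡ 3 (mod 4)`. Since `m < 0`, size considerations rule out
the resulting equations unless `a = 1` or `b = 1`, respectively `m = -1`.
-/

section CommutativeAlgebra

theorem isUnit_of_squarefree_of_mul_sq_eq_sq {R : Type*} [CommRing R] [IsDomain R]
    [IsIntegrallyClosed R] {c s t : R} (hc : Squarefree c) (hs : s ≠ 0)
    (h : c * t ^ 2 = s ^ 2) : IsUnit c := by
  obtain ⟨u, rfl⟩ : t ∣ s :=
    (IsIntegrallyClosed.pow_dvd_pow_iff two_ne_zero).mp ⟨c, by rw [← h, mul_comm]⟩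
  have ht : t ≠ 0 := left_ne_zero_of_mul hs
  have hcu : c = u * u := mul_right_cancel₀ (pow_ne_zero 2 ht) (by linear_combination h)
  have hu : IsUnit u := hc u hcu.symm.dvd
  exact hcu ▸ hu.mul hu

theorem exists_algebraMap_eq_of_isRadical_of_mul_sq_eq {R F : Type*} [CommRing R]
    [IsIntegrallyClosed R] [Field F] [Algebra R F] [IsFractionRing R F] {d k : R} {q : F}
    (hd : IsRadical d) (hd0 : d ≠ 0) (h : algebraMap R F d * q ^ 2 = algebraMap R F k) :
    ∃ y : R, algebraMap R F y = q := by
  have hsq : (algebraMap R F d * q) ^ 2 = algebraMap R F (d * k) := by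
    rw [map_mul, ← h]
    ring
  obtain ⟨n, hn⟩ : ∃ n : R, algebraMap R F n = algebraMap R F d * q :=
    IsIntegrallyClosed.exists_algebraMap_eq_of_isIntegral_pow two_pos
      (hsq ▸ isIntegral_algebraMap)
  have hnk : n ^ 2 = d * k :=
    IsFractionRing.injective R F (by rw [map_pow, hn, hsq])
  obtain ⟨y, rfl⟩ : d ∣ n := hd 2 n ⟨k, hnk⟩
  have hd0' : algebraMap R F d ≠ 0 := by
    rwa [Ne, FaithfulSMul.algebraMap_eq_zero_iff]
  exact ⟨y, mul_left_cancel₀ hd0' (by rw [← map_mul, hn])⟩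

theorem span_pair_sq_eq_span_singleton {R : Type*} [CommRing R] {c t w : R}
    (h : t ^ 2 = c * w) (htop : Ideal.span {c, t, w} = ⊤) :
    Ideal.span {c, t} ^ 2 = Ideal.span {c} := by
  calc Ideal.span {c, t} ^ 2
      = Ideal.span {c} * Ideal.span {c, t, w} := by
        rw [sq, Ideal.span_pair_mul_span_pair, Ideal.span_mul_span', ← sq t, h, mul_comm t c]
        simp [Set.singleton_mul, Set.image_insert_eq]
    _ = Ideal.span {c} := by rw [htop, Ideal.mul_top]

theorem exists_basis_one_sqrt {F A : Type*} [Field F] [Ring A] [Algebra F A]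
    (hdeg : Module.finrank F A = 2) {d : F} (hd : ¬IsSquare d) {α : A}
    (hα : α ^ 2 = algebraMap F A d) :
    ∃ b : Module.Basis (Fin 2) F A, b 0 = 1 ∧ b 1 = α := by
  have : Nontrivial A := Module.nontrivial_of_finrank_eq_succ hdeg
  have hli : LinearIndependent F ![1, α] := by
    rw [LinearIndependent.pair_iff' one_ne_zero]
    rintro r rfl
    refine hd ⟨r, (algebraMap F A).injective ?_⟩
    rw [← hα, Algebra.smul_def, mul_one, ← sq, map_pow]
  exact ⟨basisOfLinearIndependentOfCardEqFinrank hli (by simp [hdeg]), by simp, by simp⟩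

variable {R A : Type*} [CommRing R] [CommRing A] [Algebra R A]

theorem leftMulMatrix_of_basis_one_sqrt (b : Module.Basis (Fin 2) R A) {d : R} (hb0 : b 0 = 1)
    (hb1 : b 1 ^ 2 = algebraMap R A d) (x : A) :
    Algebra.leftMulMatrix b x =
      !![b.repr x 0, d * b.repr x 1; b.repr x 1, b.repr x 0] := by
  have hx : x = b.repr x 0 • b 0 + b.repr x 1 • b 1 := by
    simpa only [Fin.sum_univ_two] using (b.sum_repr x).symm
  have hx1 : x * b 1 = (d * b.repr x 1) • b 0 + b.repr x 0 • b 1 := by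
    conv_lhs => rw [hx]
    simp only [hb0, Algebra.smul_def, map_mul]
    linear_combination algebraMap R A (b.repr x 1) * hb1
  ext i j
  rw [Algebra.leftMulMatrix_eq_repr_mul]
  fin_cases j
  · fin_cases i <;> simp [hb0]
  · fin_cases i <;> simp [hx1]

theorem trace_sq_sub_four_mul_norm (b : Module.Basis (Fin 2) R A) {d : R} (hb0 : b 0 = 1)
    (hb1 : b 1 ^ 2 = algebraMap R A d) (x : A) :
    Algebra.trace R A x ^ 2 - 4 * Algebra.norm R x = d * (2 * b.repr x 1) ^ 2 := by
  rw [Algebra.trace_eq_matrix_trace b, Algebra.norm_eq_matrix_det b,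
    leftMulMatrix_of_basis_one_sqrt b hb0 hb1, Matrix.trace_fin_two_of, Matrix.det_fin_two_of]
  ring

end CommutativeAlgebra

section Diophantine

theorem mul_sq_add_mul_sq_ne_four {a b : ℤ} (ha : 2 ≤ a) (hb : 2 ≤ b) (hab : a ≠ b)
    (hsa : Squarefree a) (hsb : Squarefree b) (x y : ℤ) : a * x ^ 2 + b * y ^ 2 ≠ 4 := by
  intro h
  have not_single {c t : ℤ} (hc : 2 ≤ c) (hsc : Squarefree c) : c * t ^ 2 ≠ 2 ^ 2 := fun hct ↦ by
    have := Int.isUnit_iff.mp (isUnit_of_squarefree_of_mul_sq_eq_sq hsc two_ne_zero hct)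
    omega
  have hx : x ≠ 0 := by rintro rfl; exact not_single (t := y) hb hsb (by linear_combination h)
  have hy : y ≠ 0 := by rintro rfl; exact not_single (t := x) ha hsa (by linear_combination h)
  have hx1 : 1 ≤ x ^ 2 := Int.add_one_le_of_lt (sq_pos_of_ne_zero hx)
  have hy1 : 1 ≤ y ^ 2 := Int.add_one_le_of_lt (sq_pos_of_ne_zero hy)
  have hsum : a + b ≤ 4 := by nlinarith
  omega

theorem eq_one_or_eq_one_of_sq_add_mul_sq_eq {a b : ℕ} {x y : ℤ} (hab : Squarefree (a * b))
    (h : x ^ 2 + a * b * y ^ 2 = 4 * a) : a = 1 ∨ b = 1 := by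
  by_contra! hne
  have ha0 : a ≠ 0 := left_ne_zero_of_mul hab.ne_zero
  have hb0 : b ≠ 0 := right_ne_zero_of_mul hab.ne_zero
  have hsa : Squarefree (a : ℤ) := Int.squarefree_natCast.mpr hab.of_mul_left
  have hsb : Squarefree (b : ℤ) := Int.squarefree_natCast.mpr hab.of_mul_right
  have hne_ab : (a : ℤ) ≠ b := by
    intro hab'
    obtain rfl : a = b := by exact_mod_cast hab'
    exact hne.1 (Nat.isUnit_iff.mp (hab a dvd_rfl))
  obtain ⟨z, rfl⟩ : (a : ℤ) ∣ x :=
    hsa.isRadical 2 x ⟨4 - b * y ^ 2, by linear_combination h⟩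
  refine mul_sq_add_mul_sq_ne_four (by omega) (by omega) hne_ab hsa hsb z y ?_
  exact mul_left_cancel₀ (Nat.cast_ne_zero.mpr ha0) (by linear_combination h)

theorem sq_sub_mul_sq_ne_eight {m : ℤ} (hm : m < -1) (hm4 : m % 4 = 3) (x y : ℤ) :
    x ^ 2 - m * y ^ 2 ≠ 8 := by
  intro h
  have hm5 : m ≤ -5 := by omega
  have hy_sq : y ^ 2 ≤ 1 := by nlinarith [sq_nonneg x, sq_nonneg y]
  have hy : |y| ≤ 1 := (sq_le_one_iff_abs_le_one y).mp hy_sq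
  have hx : |x| < 3 := abs_lt_of_sq_lt_sq (by nlinarith [sq_nonneg y]) zero_le_three
  obtain ⟨hy₁, hy₂⟩ := abs_le.mp hy
  obtain ⟨hx₁, hx₂⟩ := abs_lt.mp hx
  interval_cases y <;> interval_cases x <;> omega

end Diophantine

section QuadraticField

theorem exists_ringOfIntegers_sq_eq {K : Type*} [Field K] {m : ℤ} {α : K} (hα : α ^ 2 = m) :
    ∃ θ : 𝓞 K, θ ^ 2 = m := by
  have hint : IsIntegral ℤ α :=
    .of_pow two_pos (hα ▸ isIntegral_algebraMap (R := ℤ) (x := m))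
  obtain ⟨θ, rfl⟩ := (IsIntegralClosure.isIntegral_iff (A := 𝓞 K)).mp hint
  exact ⟨θ, RingOfIntegers.ext (by simpa using hα)⟩

variable {K : Type*} [Field K] [NumberField K]

theorem exists_four_mul_norm_eq (hdeg : Module.finrank ℚ K = 2) {m : ℤ} (hsf : Squarefree m)
    (hm : ¬IsSquare m) {θ : 𝓞 K} (hθ : θ ^ 2 = m) (β : 𝓞 K) :
    ∃ x y : ℤ, 4 * Algebra.norm ℤ β = x ^ 2 - m * y ^ 2 := by
  have hθK : (θ : K) ^ 2 = algebraMap ℚ K m := by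
    simpa using congrArg (algebraMap (𝓞 K) K) hθ
  obtain ⟨b, hb0, hb1⟩ := exists_basis_one_sqrt hdeg (mt Rat.isSquare_intCast_iff.mp hm) hθK
  have hdisc := trace_sq_sub_four_mul_norm b hb0 (hb1 ▸ hθK) (β : K)
  rw [← Algebra.coe_trace_int, ← Algebra.coe_norm_int] at hdisc
  obtain ⟨y, hy⟩ := exists_algebraMap_eq_of_isRadical_of_mul_sq_eq (F := ℚ)
    (k := Algebra.trace ℤ (𝓞 K) β ^ 2 - 4 * Algebra.norm ℤ β) (q := 2 * b.repr (β : K) 1)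
    hsf.isRadical hsf.ne_zero (by simpa using hdisc.symm)
  refine ⟨Algebra.trace ℤ (𝓞 K) β, y, ?_⟩
  rw [← hy, eq_intCast] at hdisc
  have hdisc_int : Algebra.trace ℤ (𝓞 K) β ^ 2 - 4 * Algebra.norm ℤ β = m * y ^ 2 := by
    exact_mod_cast hdisc
  linear_combination -hdisc_int

theorem natAbs_norm_eq_of_span_sq_eq (hdeg : Module.finrank ℚ K = 2) {β : 𝓞 K} {c : ℕ}
    (h : Ideal.span {β} ^ 2 = Ideal.span {(c : 𝓞 K)}) : (Algebra.norm ℤ β).natAbs = c := by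
  have hsq : (Algebra.norm ℤ β).natAbs ^ 2 = c ^ 2 := by
    rw [← Ideal.absNorm_span_singleton, ← map_pow, h, Ideal.absNorm_span_natCast,
      RingOfIntegers.rank, hdeg]
  exact Nat.pow_left_injective two_ne_zero hsq

theorem isPrincipal_of_sq_of_odd_classNumber (hodd : Odd (classNumber K)) {I : Ideal (𝓞 K)}
    (hI : (I ^ 2).IsPrincipal) : I.IsPrincipal :=
  Ideal.IsPrincipal.of_isPrincipal_pow_of_coprime (Nat.coprime_two_left.mpr hodd) hI

theorem exists_sq_sub_mul_sq_eq_of_odd_classNumber (hdeg : Module.finrank ℚ K = 2)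
    (hodd : Odd (classNumber K)) {m : ℤ} (hm : m < 0) (hsf : Squarefree m) {θ : 𝓞 K}
    (hθ : θ ^ 2 = m) {I : Ideal (𝓞 K)} {c : ℕ} (hI : I ^ 2 = Ideal.span {(c : 𝓞 K)}) :
    ∃ x y : ℤ, x ^ 2 - m * y ^ 2 = 4 * c := by
  obtain ⟨β, rfl⟩ := isPrincipal_of_sq_of_odd_classNumber hodd (I := I) ⟨(c : 𝓞 K), hI⟩
  obtain ⟨x, y, hxy⟩ :=
    exists_four_mul_norm_eq hdeg hsf (fun h ↦ hm.not_ge h.nonneg) hθ β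
  have hnorm : (Algebra.norm ℤ β).natAbs = c := natAbs_norm_eq_of_span_sq_eq hdeg hI
  have hnonneg : 0 ≤ Algebra.norm ℤ β := by nlinarith [sq_nonneg x, sq_nonneg y]
  exact ⟨x, y, by omega⟩

theorem eq_one_or_eq_one_of_odd_classNumber (hdeg : Module.finrank ℚ K = 2)
    (hodd : Odd (classNumber K)) {a b : ℕ} (hsf : Squarefree (a * b)) {θ : 𝓞 K}
    (hθ : θ ^ 2 = -(a * b)) : a = 1 ∨ b = 1 := by
  have htop : Ideal.span {(a : 𝓞 K), θ, -(b : 𝓞 K)} = ⊤ := by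
    obtain ⟨u, v, huv⟩ := (Nat.coprime_of_squarefree_mul hsf).cast (R := 𝓞 K)
    rw [Ideal.eq_top_iff_one, Ideal.mem_span_insert]
    exact ⟨u, -v * -b, Ideal.mul_mem_left _ _ (Ideal.subset_span (by simp)),
      by linear_combination -huv⟩
  have hI := span_pair_sq_eq_span_singleton (by rw [hθ, mul_neg]) htop
  have hpos : (0 : ℤ) < a * b := by exact_mod_cast Nat.pos_of_ne_zero hsf.ne_zero
  have hsf' : Squarefree (-(a * b : ℤ)) := by
    rw [← Int.squarefree_natAbs]
    simpa [Int.natAbs_mul] using hsf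
  obtain ⟨x, y, hxy⟩ := exists_sq_sub_mul_sq_eq_of_odd_classNumber hdeg hodd
    (neg_neg_of_pos hpos) hsf' (by push_cast; exact hθ) hI
  exact eq_one_or_eq_one_of_sq_add_mul_sq_eq (x := x) (y := y) hsf (by linear_combination hxy)

theorem prime_natAbs_of_odd_classNumber (hdeg : Module.finrank ℚ K = 2)
    (hodd : Odd (classNumber K)) {m : ℤ} (hm : m < -1) (hsf : Squarefree m) {θ : 𝓞 K}
    (hθ : θ ^ 2 = m) : m.natAbs.Prime := by
  refine ⟨by rw [Nat.isUnit_iff]; omega, fun a b hab ↦ ?_⟩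
  have hmab : m = -(a * b : ℤ) := by
    rw [← Nat.cast_mul, ← hab]
    omega
  simp only [Nat.isUnit_iff]
  refine eq_one_or_eq_one_of_odd_classNumber hdeg hodd ?_ (by rw [hθ, hmab]; push_cast; rfl)
  rwa [← hab, Int.squarefree_natAbs]

theorem eq_neg_one_of_odd_classNumber (hdeg : Module.finrank ℚ K = 2)
    (hodd : Odd (classNumber K)) {m : ℤ} (hm : m < 0) (hsf : Squarefree m) (hm4 : m % 4 = 3)
    {θ : 𝓞 K} (hθ : θ ^ 2 = m) : m = -1 := by
  obtain ⟨k, rfl⟩ : ∃ k : ℤ, m = 4 * k - 1 := ⟨(m + 1) / 4, by omega⟩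
  have hfac : (1 + θ) ^ 2 = (2 : ℕ) * (θ + 2 * k) := by
    push_cast at hθ ⊢
    linear_combination hθ
  have htop : Ideal.span {((2 : ℕ) : 𝓞 K), 1 + θ, θ + 2 * k} = ⊤ := by
    rw [Ideal.eq_top_iff_one, Ideal.mem_span_insert]
    refine ⟨k, (1 + θ) - (θ + 2 * k), ?_, by push_cast; ring⟩
    exact sub_mem (Ideal.subset_span (by simp)) (Ideal.subset_span (by simp))
  obtain ⟨x, y, hxy⟩ := exists_sq_sub_mul_sq_eq_of_odd_classNumber hdeg hodd hm hsf hθ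
    (span_pair_sq_eq_span_singleton hfac htop)
  by_contra hne
  exact sq_sub_mul_sq_ne_eight (by omega) hm4 x y (by simpa using hxy)

end QuadraticField

/-- Let `m < 0` be a squarefree integer. If the class number of the imaginary quadratic
field `ℚ(√m)` (formalized as any degree-2 number field containing a square root of `m`)
is odd, then `m = −1`, `m = −2`, or `m = −q` for some prime `q ≡ 3 (mod 4)`. -/
theorem eq_of_odd_classNumber_imaginary_quadratic
    (m : ℤ) (hm : m < 0) (hsf : Squarefree m)
    (K : Type) [Field K] [NumberField K]
    (hdeg : Module.finrank ℚ K = 2)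
    (α : K) (hα : α ^ 2 = (m : K))
    (hodd : Odd (NumberField.classNumber K)) :
    m = -1 ∨ m = -2 ∨ ∃ q : ℕ, q.Prime ∧ q % 4 = 3 ∧ m = -(q : ℤ) := by
  obtain ⟨θ, hθ⟩ := exists_ringOfIntegers_sq_eq hα
  by_cases hm1 : m = -1
  · exact .inl hm1
  have hprime : m.natAbs.Prime :=
    prime_natAbs_of_odd_classNumber hdeg hodd (by omega) hsf hθ
  have hm4 : m % 4 ≠ 3 := fun hm4 ↦
    hm1 (eq_neg_one_of_odd_classNumber hdeg hodd hm hsf hm4 hθ)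
  rcases hprime.eq_two_or_odd with htwo | hodd_m
  · exact .inr (.inl (by omega))
  · exact .inr (.inr ⟨m.natAbs, hprime, by omega, by omega⟩)
end

section
/- For every prime p, the class number of the real quadratic field ℚ(√p) is odd. -/
open NumberField

/-!
It suffices to show that an ideal `I` of `𝓞 K` with `I ^ 2 = (x)` is principal. Let `σ` be the
conjugation of `K`, `δ = √p` and `n` the norm of `I`, so that `x * σ x = ± n ^ 2`. The sign can be
taken to be `+`: if `p % 4 ≠ 3`, there is a unit of norm `-1`, and if `p % 4 = 3`, then `-n ^ 2` is
not a norm from `K`. Now `β = σ x + n` satisfies `β ^ 2 * x = n ^ 2 * (x + σ x + 2 * n)`, so the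
square of `β I` is generated by an integer. Ideals have at most one square root, hence `β I` is
stable under `σ`.

Let `J` be a `σ`-stable ideal, with `J ∩ ℤ = mℤ` and `J ∩ ℤδ = kδℤ`. Then `k ∣ m ∣ kp`, so that `m`
is `± k` or `± kp`, and it follows that `2J = γJ'` with `γ = k` or `γ = kδ` and `2 ∈ J' ⊆ ℤ[δ]`.
This forces `J'` to be `(1)`, `(2)` or `(2, p + δ)`. The last ideal is principal as well: it is
`(2)` if `p % 4 = 1`, and otherwise the fundamental solution of Pell's equation
`x ^ 2 - p * y ^ 2 = 1` provides an element `a + bδ` of norm `± 2`, which generates it.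
-/

/-! ### Pell equations -/

theorem exists_sq_and_sq_of_mul_eq_sq {u v w : ℤ} (hu : 0 ≤ u) (hv : 0 ≤ v)
    (huv : IsCoprime u v) (h : u * v = w ^ 2) : ∃ a b : ℤ, u = a ^ 2 ∧ v = b ^ 2 := by
  obtain ⟨a, ha⟩ := Int.sq_of_isCoprime huv h
  obtain ⟨b, hb⟩ := Int.sq_of_isCoprime huv.symm ((mul_comm v u).trans h)
  have ha' : u = a ^ 2 := ha.elim id fun ha ↦ by nlinarith [sq_nonneg a]
  have hb' : v = b ^ 2 := hb.elim id fun hb ↦ by nlinarith [sq_nonneg b]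
  exact ⟨a, b, ha', hb'⟩

theorem exists_sq_and_prime_mul_sq_of_mul_eq {p u v w : ℤ} (hp : Prime p) (hp0 : 0 < p)
    (hu : 0 < u) (hv : 0 < v) (huv : IsCoprime u v) (h : u * v = p * w ^ 2) :
    ∃ a b : ℤ, u = a ^ 2 ∧ v = p * b ^ 2 ∨ v = a ^ 2 ∧ u = p * b ^ 2 := by
  wlog hpv : p ∣ v generalizing u v
  · have hpu : p ∣ u := (hp.dvd_or_dvd ⟨_, h⟩).resolve_right hpv
    obtain ⟨a, b, hab⟩ := this hv hu huv.symm ((mul_comm v u).trans h) hpu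
    exact ⟨a, b, hab.symm⟩
  obtain ⟨v', rfl⟩ := hpv
  have hv' : 0 < v' := pos_of_mul_pos_right hv hp0.le
  have huv' : u * v' = w ^ 2 := mul_left_cancel₀ hp.ne_zero (by linear_combination h)
  obtain ⟨a, b, rfl, rfl⟩ :=
    exists_sq_and_sq_of_mul_eq_sq hu.le hv'.le huv.of_mul_right_right huv'
  exact ⟨a, b, .inl ⟨rfl, rfl⟩⟩

theorem exists_sq_sub_mul_sq_eq_neg_one_of_odd_x {p : ℤ} (hp : Prime p) (hodd : Odd p)
    {s : Pell.Solution₁ p} (hs : Pell.IsFundamental s) (hx : Odd s.x) :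
    ∃ a b : ℤ, a ^ 2 - p * b ^ 2 = -1 := by
  obtain ⟨k, hk⟩ := hx
  have hpell := s.prop
  have hy : Even s.y := by
    have hpy : Even (p * s.y ^ 2) := ⟨2 * k * (k + 1), by rw [hk] at hpell; linarith⟩
    exact (Int.even_pow.mp ((Int.even_mul.mp hpy).resolve_left (Int.not_even_iff_odd.mpr hodd))).1
  obtain ⟨w, hw⟩ := hy
  have hkw : k * (k + 1) = p * w ^ 2 := by rw [hk, hw] at hpell; linarith
  have hk0 : 0 < k := by linarith [hs.1]
  obtain ⟨a, b, ⟨hka, hkb⟩ | ⟨hka, hkb⟩⟩ := exists_sq_and_prime_mul_sq_of_mul_eq hp hs.d_pos hk0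
    (by linarith) ⟨-1, 1, by ring⟩ hkw
  · exact ⟨a, b, by linarith⟩
  · -- `(|a|, b)` solves Pell's equation and is smaller than the fundamental solution.
    have ha : 1 < |a| := by rw [← one_lt_sq_iff_one_lt_abs, ← hka]; linarith
    have hmin : s.x ≤ |a| := hs.x_le_x (a := .mk |a| b (by rw [sq_abs]; linarith)) ha
    nlinarith [sq_abs a]

theorem exists_abs_sq_sub_mul_sq_eq_two_of_even_x {p : ℤ} (hp : Prime p) (hp0 : 0 < p)
    {s : Pell.Solution₁ p} (hs : 1 < s.x) (hx : Even s.x) :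
    ∃ a b : ℤ, |a ^ 2 - p * b ^ 2| = 2 := by
  obtain ⟨k, hk⟩ := hx
  have hcop : IsCoprime (s.x - 1) (s.x + 1) := ⟨k, 1 - k, by rw [hk]; ring⟩
  obtain ⟨a, b, hab⟩ := exists_sq_and_prime_mul_sq_of_mul_eq hp hp0 (by linarith)
    (by linarith) hcop (w := s.y) (by linear_combination s.prop)
  refine ⟨a, b, (abs_eq two_pos.le).mpr ?_⟩
  obtain ⟨ha, hb⟩ | ⟨ha, hb⟩ := hab
  · exact .inr (by linarith)
  · exact .inl (by linarith)

theorem sq_emod_four_eq_zero_or_one (a : ℤ) : a ^ 2 % 4 = 0 ∨ a ^ 2 % 4 = 1 := by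
  obtain ⟨k, rfl | rfl⟩ := Int.even_or_odd' a <;> ring_nf <;> omega

theorem exists_sq_sub_mul_sq_eq_neg_one {p : ℕ} (hp : p.Prime) (hp4 : p % 4 ≠ 3) :
    ∃ a b : ℤ, a ^ 2 - p * b ^ 2 = -1 := by
  have hpZ : Prime (p : ℤ) := Nat.prime_iff_prime_int.mp hp
  rcases hp.eq_two_or_odd with rfl | hodd
  · exact ⟨1, 1, by norm_num⟩
  obtain ⟨s, hs⟩ := Pell.IsFundamental.exists_of_not_isSquare (Int.natCast_pos.mpr hp.pos)
    hpZ.irreducible.not_isSquare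
  refine exists_sq_sub_mul_sq_eq_neg_one_of_odd_x hpZ ⟨p / 2, by omega⟩ hs ?_
  by_contra hx
  obtain ⟨k, hk⟩ := Int.not_odd_iff_even.mp hx
  obtain ⟨j, hj⟩ : ∃ j : ℤ, (p : ℤ) = 4 * j + 1 := ⟨p / 4, by omega⟩
  have hpell := s.prop
  have h4 : (4 : ℤ) ∣ s.y ^ 2 + 1 :=
    ⟨k ^ 2 - j * s.y ^ 2, by rw [hk] at hpell; linear_combination -hpell - s.y ^ 2 * hj⟩
  have hy := sq_emod_four_eq_zero_or_one s.y
  omega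

theorem exists_abs_sq_sub_mul_sq_eq_two {p : ℕ} (hp : p.Prime) (hp4 : p % 4 ≠ 1) :
    ∃ a b : ℤ, |a ^ 2 - p * b ^ 2| = 2 := by
  have hpZ : Prime (p : ℤ) := Nat.prime_iff_prime_int.mp hp
  have hp0 : (0 : ℤ) < p := Int.natCast_pos.mpr hp.pos
  rcases hp.eq_two_or_odd with rfl | hodd
  · exact ⟨0, 1, by norm_num⟩
  obtain ⟨s, hs⟩ := Pell.IsFundamental.exists_of_not_isSquare hp0 hpZ.irreducible.not_isSquare
  refine exists_abs_sq_sub_mul_sq_eq_two_of_even_x hpZ hp0 hs.1 ?_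
  by_contra hx
  obtain ⟨a, b, hab⟩ := exists_sq_sub_mul_sq_eq_neg_one_of_odd_x hpZ ⟨p / 2, by omega⟩ hs
    (Int.not_even_iff_odd.mp hx)
  obtain ⟨j, hj⟩ : ∃ j : ℤ, (p : ℤ) = 4 * j + 3 := ⟨p / 4, by omega⟩
  have h4 : (4 : ℤ) ∣ a ^ 2 + b ^ 2 + 1 :=
    ⟨(j + 1) * b ^ 2, by linear_combination hab + b ^ 2 * hj⟩
  have ha := sq_emod_four_eq_zero_or_one a
  have hb := sq_emod_four_eq_zero_or_one b
  omega

theorem eq_zero_of_sq_add_sq_eq_prime_mul_sq {p : ℕ} (hp : p.Prime) (hp4 : p % 4 = 3)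
    {x y z : ℤ} (h : x ^ 2 + y ^ 2 = p * z ^ 2) : z = 0 := by
  by_contra hz
  have := Fact.mk hp
  have hnat : p * z.natAbs ^ 2 = x.natAbs ^ 2 + y.natAbs ^ 2 := by
    zify; simpa only [sq_abs] using h.symm
  have hval : Even (padicValNat p (p * z.natAbs ^ 2)) :=
    Nat.eq_sq_add_sq_iff.mp ⟨_, _, hnat⟩ p (by simp [hp, hp.ne_zero, hz]) hp4
  rw [padicValNat.mul hp.ne_zero (by simpa using hz), padicValNat.pow, padicValNat_self,
    Nat.even_iff] at hval
  omega

/-! ### Ideals containing `2` -/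

section QuadraticRing

variable {R : Type*} [CommRing R] {d : ℤ} {δ : R}

theorem two_dvd_one_add_of_sq_eq [IsDomain R] [IsIntegrallyClosed R] [CharZero R]
    (hδ : δ ^ 2 = d) (hd : d % 4 = 1) : 2 ∣ 1 + δ := by
  obtain ⟨k, rfl⟩ : ∃ k : ℤ, d = 4 * k + 1 := ⟨d / 4, by omega⟩
  have hint : IsIntegral R (algebraMap R (FractionRing R) (1 + δ) / 2) := by
    refine ⟨.X ^ 2 - .X - .C (k : R), by monicity!, ?_⟩
    have hδ' : algebraMap R (FractionRing R) δ ^ 2 = 4 * k + 1 := by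
      rw [← map_pow, hδ, map_intCast]
      push_cast
      rfl
    rw [Polynomial.eval₂_sub, Polynomial.eval₂_sub, Polynomial.eval₂_pow, Polynomial.eval₂_X,
      Polynomial.eval₂_C, map_add, map_one, map_intCast]
    linear_combination hδ' / 4
  obtain ⟨w, hw⟩ := IsIntegrallyClosed.isIntegral_iff.mp hint
  refine ⟨w, IsFractionRing.injective R (FractionRing R) ?_⟩
  rw [map_mul, hw, map_ofNat, mul_div_cancel₀ _ two_ne_zero]

theorem span_two_add_mul_eq_span_two_add (δ : R) {a b : ℤ} (hb : Odd b)
    (hadb : Even (a - d * b)) :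
    Ideal.span {2, (a : R) + b * δ} = Ideal.span {2, (d : R) + δ} := by
  obtain ⟨j, rfl⟩ := hb
  obtain ⟨k, hk⟩ := hadb
  obtain rfl : a = 2 * k + d * (2 * j + 1) := by linarith
  rw [← Ideal.span_pair_add_left_mul (y := (d : R) + δ) (z := (k + d * j + j * δ : R))]
  congr 3
  push_cast
  ring

theorem odd_and_even_sub_mul_of_abs_eq_two {a b : ℤ} (hab : |a ^ 2 - d * b ^ 2| = 2) :
    Odd b ∧ Even (a - d * b) := by
  have heven : Even (a ^ 2 - d * b ^ 2) := even_abs.mp (hab ▸ even_two)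
  have hsub : Even (a - d * b) := by
    simpa only [Int.even_sub, Int.even_mul, Int.even_pow' two_ne_zero] using heven
  refine ⟨Int.not_even_iff_odd.mp fun hb ↦ ?_, hsub⟩
  have ha : Even a := by simpa [Int.even_sub, hb] using hsub
  obtain ⟨j, rfl⟩ := ha
  obtain ⟨k, rfl⟩ := hb
  have h4 : (4 : ℤ) ∣ |(j + j) ^ 2 - d * (k + k) ^ 2| :=
    (dvd_abs _ _).mpr ⟨j ^ 2 - d * k ^ 2, by ring⟩
  norm_num [hab] at h4

theorem span_two_add_eq_span_of_abs_eq_two (hδ : δ ^ 2 = d) {a b : ℤ}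
    (hab : |a ^ 2 - d * b ^ 2| = 2) :
    Ideal.span {2, (d : R) + δ} = Ideal.span {(a : R) + b * δ} := by
  have hnorm : ((a : R) + b * δ) * (a - b * δ) = ((a ^ 2 - d * b ^ 2 : ℤ) : R) := by
    push_cast
    linear_combination -(b : R) ^ 2 * hδ
  have htwo : (a : R) + b * δ ∣ 2 := by
    obtain h | h := (abs_eq two_pos.le).mp hab <;> rw [h] at hnorm <;> push_cast at hnorm
    · exact ⟨_, hnorm.symm⟩
    · exact ⟨-(a - b * δ), by linear_combination hnorm⟩
  obtain ⟨hb, hadb⟩ := odd_and_even_sub_mul_of_abs_eq_two hab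
  rw [← span_two_add_mul_eq_span_two_add δ hb hadb, Ideal.span_pair_eq_span_right_iff_dvd]
  exact htwo

theorem eq_top_of_two_mem_of_odd_sub_mul (hδ : δ ^ 2 = d) {I : Ideal R} (h2 : 2 ∈ I) {a b : ℤ}
    (hmem : (a : R) + b * δ ∈ I) (hodd : Odd (a - d * b)) : I = ⊤ := by
  have hsq : Odd (a ^ 2 + d * b ^ 2) := by
    simpa [Int.odd_sub, Int.odd_add, Int.even_mul, Int.odd_mul, Int.even_pow, Int.odd_pow]
      using hodd
  obtain ⟨k, hk⟩ := hsq
  have hk' : (a : R) ^ 2 + d * b ^ 2 = 2 * k + 1 := by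
    simpa using congrArg (Int.cast : ℤ → R) hk
  have hone : ((a : R) + b * δ) * (a + b * δ) - (k + a * b * δ) * 2 = 1 := by
    linear_combination (b : R) ^ 2 * hδ + hk'
  rw [Ideal.eq_top_iff_one, ← hone]
  exact I.sub_mem (I.mul_mem_left _ hmem) (I.mul_mem_left _ h2)

-- `ℤ[δ] / 2` is the local ring `𝔽₂[ε]` with `ε = d + δ` and `ε ^ 2 = 0`, which has three ideals.
theorem eq_top_or_span_two_or_span_two_add (hδ : δ ^ 2 = d) {I : Ideal R} (h2 : 2 ∈ I)
    (hI : ∀ w ∈ I, ∃ a b : ℤ, w = a + b * δ) :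
    I = ⊤ ∨ I = Ideal.span {2} ∨ I = Ideal.span {2, (d : R) + δ} := by
  by_cases hpar : ∀ a b : ℤ, (a : R) + b * δ ∈ I → Even (a - d * b)
  swap
  · push Not at hpar
    obtain ⟨a, b, hmem, hab⟩ := hpar
    exact .inl (eq_top_of_two_mem_of_odd_sub_mul hδ h2 hmem (Int.not_even_iff_odd.mp hab))
  have hmem_two : ∀ a b : ℤ, (a : R) + b * δ ∈ I → Even b → (a : R) + b * δ ∈ Ideal.span {2} := by
    rintro a b hmem hb
    have ha : Even a := by simpa [Int.even_sub, hb] using hpar a b hmem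
    obtain ⟨j, rfl⟩ := ha
    obtain ⟨k, rfl⟩ := hb
    exact Ideal.mem_span_singleton.mpr ⟨j + k * δ, by push_cast; ring⟩
  by_cases hodd : ∃ a b : ℤ, (a : R) + b * δ ∈ I ∧ Odd b
  · obtain ⟨a, b, hmem, hb⟩ := hodd
    refine .inr (.inr (le_antisymm (fun w hw ↦ ?_) ?_))
    · obtain ⟨a', b', rfl⟩ := hI w hw
      obtain hb' | hb' := Int.even_or_odd b'
      · exact Ideal.span_mono (by simp) (hmem_two a' b' hw hb')
      · rw [← span_two_add_mul_eq_span_two_add δ hb' (hpar a' b' hw)]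
        exact Ideal.subset_span (by simp)
    · rw [← span_two_add_mul_eq_span_two_add δ hb (hpar a b hmem), Ideal.span_le]
      exact Set.pair_subset h2 hmem
  · push Not at hodd
    refine .inr (.inl (le_antisymm (fun w hw ↦ ?_) (Ideal.span_le.mpr (by simpa using h2))))
    obtain ⟨a, b, rfl⟩ := hI w hw
    exact hmem_two a b hw (Int.not_odd_iff_even.mp (hodd a b hw))

end QuadraticRing

section PrincipalIdeals

variable {R : Type*} [CommRing R]

theorem isPrincipal_of_isPrincipal_span_singleton_mul [IsDomain R] {β : R} (hβ : β ≠ 0)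
    {I : Ideal R} (h : (Ideal.span {β} * I).IsPrincipal) : I.IsPrincipal := by
  obtain ⟨g, hg⟩ := h
  rw [Ideal.submodule_span_eq] at hg
  obtain ⟨z, -, rfl⟩ := Ideal.mem_span_singleton_mul.mp (hg ▸ Ideal.mem_span_singleton_self g)
  rw [← Ideal.span_singleton_mul_span_singleton, Ideal.span_singleton_mul_right_inj hβ] at hg
  exact ⟨z, hg⟩

theorem exists_intCast_mul_mem_iff_dvd (I : Ideal R) (y : R) :
    ∃ m : ℤ, ∀ n : ℤ, (n : R) * y ∈ I ↔ m ∣ n := by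
  obtain ⟨m, hm⟩ := (inferInstance :
    ((I.restrictScalars ℤ).comap (LinearMap.toSpanSingleton ℤ R y)).IsPrincipal)
  refine ⟨m, fun n ↦ ?_⟩
  rw [← Ideal.mem_span_singleton, ← Ideal.submodule_span_eq, ← hm, Submodule.mem_comap]
  simp [zsmul_eq_mul]

theorem isPrincipal_span_two_add [IsDomain R] [IsIntegrallyClosed R] [CharZero R] {p : ℕ}
    (hp : p.Prime) {δ : R} (hδ : δ ^ 2 = (p : ℤ)) :
    (Ideal.span {2, ((p : ℤ) : R) + δ}).IsPrincipal := by
  by_cases hp4 : p % 4 = 1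
  · have h2 : (2 : R) ∣ ((p : ℤ) : R) + δ := by
      obtain ⟨w, hw⟩ := two_dvd_one_add_of_sq_eq hδ (by omega)
      obtain ⟨k, hk⟩ : ∃ k, p = 2 * k + 1 := ⟨p / 2, by omega⟩
      exact ⟨k + w, by rw [hk]; push_cast; linear_combination hw⟩
    exact ⟨2, Ideal.span_pair_eq_span_left_iff_dvd.mpr h2⟩
  · obtain ⟨a, b, hab⟩ := exists_abs_sq_sub_mul_sq_eq_two hp hp4
    exact ⟨_, span_two_add_eq_span_of_abs_eq_two hδ hab⟩

theorem exists_span_two_mul_eq_span_singleton_mul [IsDedekindDomain R] {δ γ : R} (hγ0 : γ ≠ 0)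
    {I : Ideal R} (hγI : γ ∈ I) (hγ : ∀ x ∈ I, ∃ a b : ℤ, 2 * x = γ * (a + b * δ)) :
    ∃ J : Ideal R, Ideal.span {2} * I = Ideal.span {γ} * J ∧ 2 ∈ J ∧
      ∀ w ∈ J, ∃ a b : ℤ, w = a + b * δ := by
  have hle : Ideal.span {2} * I ≤ Ideal.span {γ} := fun y hy ↦ by
    obtain ⟨x, hx, rfl⟩ := Ideal.mem_span_singleton_mul.mp hy
    obtain ⟨a, b, hab⟩ := hγ x hx
    exact Ideal.mem_span_singleton.mpr ⟨_, hab⟩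
  obtain ⟨J, hJ⟩ := Ideal.dvd_iff_le.mpr hle
  refine ⟨J, hJ, ?_, fun w hw ↦ ?_⟩
  · have hmem : 2 * γ ∈ Ideal.span {γ} * J := hJ ▸ Ideal.mem_span_singleton_mul.mpr ⟨γ, hγI, rfl⟩
    obtain ⟨z, hz, hzγ⟩ := Ideal.mem_span_singleton_mul.mp hmem
    rwa [← mul_left_cancel₀ hγ0 (hzγ.trans (mul_comm 2 γ))]
  · have hmem : γ * w ∈ Ideal.span {2} * I := hJ ▸ Ideal.mem_span_singleton_mul.mpr ⟨w, hw, rfl⟩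
    obtain ⟨x, hx, hxw⟩ := Ideal.mem_span_singleton_mul.mp hmem
    obtain ⟨a, b, hab⟩ := hγ x hx
    exact ⟨a, b, mul_left_cancel₀ hγ0 (hxw.symm.trans hab)⟩

theorem isPrincipal_of_forall_two_mul_eq [IsDedekindDomain R] [CharZero R] {p : ℕ}
    (hp : p.Prime) {δ γ : R} (hδ : δ ^ 2 = (p : ℤ)) {I : Ideal R} (hγI : γ ∈ I)
    (hγ : ∀ x ∈ I, ∃ a b : ℤ, 2 * x = γ * (a + b * δ)) : I.IsPrincipal := by
  obtain rfl | hγ0 := eq_or_ne γ 0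
  · suffices I = ⊥ from this ▸ bot_isPrincipal
    refine (Submodule.eq_bot_iff I).mpr fun x hx ↦ ?_
    obtain ⟨a, b, hab⟩ := hγ x hx
    simpa using hab
  obtain ⟨J, hIJ, htwo, hsub⟩ := exists_span_two_mul_eq_span_singleton_mul hγ0 hγI hγ
  have hJ : J.IsPrincipal := by
    obtain rfl | rfl | rfl := eq_top_or_span_two_or_span_two_add hδ htwo hsub
    · exact top_isPrincipal
    · exact ⟨2, rfl⟩
    · exact isPrincipal_span_two_add hp hδ
  obtain ⟨g, rfl⟩ := hJ
  exact isPrincipal_of_isPrincipal_span_singleton_mul two_ne_zero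
    ⟨γ * g, hIJ.trans (Ideal.span_singleton_mul_span_singleton γ g)⟩

end PrincipalIdeals

theorem dvd_or_mul_dvd_of_dvd_mul_prime {k m d : ℤ} (hd : Prime d) (hkm : k ∣ m)
    (hmd : m ∣ k * d) : m ∣ k ∨ k * d ∣ m := by
  obtain ⟨c, rfl⟩ := hkm
  obtain rfl | hk := eq_or_ne k 0
  · simp
  obtain hc | hc := hd.irreducible.dvd_iff.mp ((mul_dvd_mul_iff_left hk).mp hmd)
  · exact .inl (hc.mul_right_dvd.mpr dvd_rfl)
  · exact .inr (mul_dvd_mul_left k hc.dvd)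

/-! ### Conjugation -/

theorem absNorm_span_singleton_of_mul_apply_eq {O : Type*} [CommRing O] [IsDedekindDomain O]
    [Algebra.IsQuadraticExtension ℤ O] (σ : O ≃+* O) {x : O} {n : ℤ} (hx : x * σ x = n) :
    Ideal.absNorm (Ideal.span {x}) = n.natAbs := by
  have hnorm : Algebra.norm ℤ x ^ 2 = n ^ 2 := calc
    Algebra.norm ℤ x ^ 2 = Algebra.norm ℤ (x * σ x) := by
      rw [map_mul, sq]
      congr 1
      exact (Algebra.norm_eq_of_algEquiv σ.toIntAlgEquiv x).symm
    _ = n ^ 2 := by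
      rw [hx, ← eq_intCast (algebraMap ℤ O) n, Algebra.norm_algebraMap,
        Algebra.IsQuadraticExtension.finrank_eq_two]
  rw [Ideal.absNorm_span_singleton]
  exact Int.natAbs_eq_iff_sq_eq.mpr hnorm

theorem map_eq_self_of_sq_eq_span_intCast {O : Type*} [CommRing O] [IsDedekindDomain O]
    (σ : O ≃+* O) {J : Ideal O} {r : ℤ} (hJ : J ^ 2 = Ideal.span {(r : O)}) : J.map σ = J := by
  refine pow_left_injective two_ne_zero ?_
  change J.map σ ^ 2 = J ^ 2
  rw [← Ideal.map_pow, hJ, Ideal.map_span, Set.image_singleton, map_intCast]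

/-- `σ` behaves like the nontrivial automorphism of the ring of integers of a quadratic field:
it is an involution whose fixed ring is the image of `ℤ`. -/
structure IsQuadraticConj {O : Type*} [CommRing O] (σ : O ≃+* O) : Prop where
  apply_apply : ∀ x, σ (σ x) = x
  exists_eq_intCast : ∀ x, σ x = x → ∃ n : ℤ, x = n

namespace IsQuadraticConj

variable {O : Type*} [CommRing O] {σ : O ≃+* O} (hσ : IsQuadraticConj σ)
include hσ

theorem exists_add_apply_eq (x : O) : ∃ t : ℤ, x + σ x = t :=
  hσ.exists_eq_intCast _ (by rw [map_add, hσ.apply_apply, add_comm])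

theorem exists_mul_apply_eq (x : O) : ∃ n : ℤ, x * σ x = n :=
  hσ.exists_eq_intCast _ (by rw [map_mul, hσ.apply_apply, mul_comm])

theorem apply_eq_neg_of_sq_eq [IsDomain O] [CharZero O] {d : ℤ} (hd : ¬IsSquare d) {δ : O}
    (hδ : δ ^ 2 = d) : σ δ = -δ := by
  have hsq : σ δ ^ 2 = δ ^ 2 := by rw [← map_pow, hδ, map_intCast]
  refine (sq_eq_sq_iff_eq_or_eq_neg.mp hsq).resolve_left fun hfix ↦ hd ?_
  obtain ⟨n, rfl⟩ := hσ.exists_eq_intCast δ hfix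
  exact ⟨n, by rw [← sq]; exact_mod_cast hδ.symm⟩

theorem exists_sub_apply_eq [IsDomain O] [CharZero O] {d : ℤ} (hd : Squarefree d) {δ : O}
    (hδ : δ ^ 2 = d) (hσδ : σ δ = -δ) (x : O) : ∃ b : ℤ, x - σ x = b * δ := by
  have hδ0 : δ ≠ 0 := by
    rintro rfl
    exact hd.ne_zero (by simpa using hδ.symm)
  obtain ⟨v, hv⟩ := hσ.exists_eq_intCast ((x - σ x) * δ)
    (by rw [map_mul, map_sub, hσ.apply_apply, hσδ]; ring)
  obtain ⟨t, ht⟩ := hσ.exists_add_apply_eq x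
  obtain ⟨n, hn⟩ := hσ.exists_mul_apply_eq x
  have hv2 : v ^ 2 = d * (t ^ 2 - 4 * n) := by
    apply Int.cast_injective (α := O)
    push_cast
    rw [← hv, ← ht, ← hn, ← hδ]
    ring
  obtain ⟨b, rfl⟩ : d ∣ v := hd.isRadical 2 v ⟨_, hv2⟩
  refine ⟨b, mul_right_cancel₀ hδ0 ?_⟩
  push_cast at hv
  rw [hv, ← hδ]
  ring

-- `β = σ x + n` is the element that Hilbert 90 attaches to `x / n`, which has norm one.
theorem exists_ne_zero_map_span_mul_eq [IsDedekindDomain O] {I : Ideal O} {x : O} {n : ℤ}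
    (hI : I ^ 2 = Ideal.span {x}) (hx : x * σ x = (n : O) ^ 2) :
    ∃ β : O, β ≠ 0 ∧ (Ideal.span {β} * I).map σ = Ideal.span {β} * I := by
  by_cases hβ : σ x + n = 0
  · obtain rfl : x = ((-n : ℤ) : O) := by
      rw [← hσ.apply_apply x, eq_neg_of_add_eq_zero_left hβ]
      simp
    refine ⟨1, one_ne_zero, map_eq_self_of_sq_eq_span_intCast σ (r := -n) ?_⟩
    rw [mul_pow, hI, Ideal.span_singleton_one, Ideal.one_eq_top.symm, one_pow, one_mul]
  · obtain ⟨t, ht⟩ := hσ.exists_add_apply_eq x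
    refine ⟨_, hβ, map_eq_self_of_sq_eq_span_intCast σ (r := n ^ 2 * (t + 2 * n)) ?_⟩
    rw [mul_pow, hI, Ideal.span_singleton_pow, Ideal.span_singleton_mul_span_singleton]
    congr 2
    push_cast
    rw [← ht]
    linear_combination (σ x + 2 * n) * hx

theorem exists_mem_forall_two_mul_eq [IsDomain O] [CharZero O] {d : ℤ} (hd : Prime d) {δ : O}
    (hδ : δ ^ 2 = d) {I : Ideal O} (hI : I.map σ = I) :
    ∃ γ ∈ I, ∀ x ∈ I, ∃ a b : ℤ, 2 * x = γ * (a + b * δ) := by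
  have hσδ : σ δ = -δ := hσ.apply_eq_neg_of_sq_eq hd.irreducible.not_isSquare hδ
  obtain ⟨m, hm⟩ : ∃ m : ℤ, ∀ n : ℤ, (n : O) ∈ I ↔ m ∣ n := by
    simpa using exists_intCast_mul_mem_iff_dvd I 1
  obtain ⟨k, hk⟩ := exists_intCast_mul_mem_iff_dvd I δ
  have hsplit : ∀ x ∈ I, ∃ a b : ℤ, m ∣ a ∧ k ∣ b ∧ 2 * x = a + b * δ := by
    intro x hx
    have hσx : σ x ∈ I := hI ▸ Ideal.mem_map_of_mem σ hx
    obtain ⟨a, ha⟩ := hσ.exists_add_apply_eq x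
    obtain ⟨b, hb⟩ := hσ.exists_sub_apply_eq hd.squarefree hδ hσδ x
    refine ⟨a, b, (hm a).mp (ha ▸ I.add_mem hx hσx), (hk b).mp (hb ▸ I.sub_mem hx hσx), ?_⟩
    linear_combination ha + hb
  have hkδ : (k : O) * δ ∈ I := (hk k).mpr dvd_rfl
  have hkm : k ∣ m := (hk m).mp (I.mul_mem_right δ ((hm m).mpr dvd_rfl))
  have hmkd : m ∣ k * d := by
    rw [← hm, Int.cast_mul, ← hδ, sq, ← mul_assoc]
    exact I.mul_mem_right δ hkδ
  obtain hmk | hkdm := dvd_or_mul_dvd_of_dvd_mul_prime hd hkm hmkd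
  · refine ⟨k, (hm k).mpr hmk, fun x hx ↦ ?_⟩
    obtain ⟨a, b, ha, ⟨b, rfl⟩, hx2⟩ := hsplit x hx
    obtain ⟨a, rfl⟩ := hkm.trans ha
    exact ⟨a, b, by rw [hx2]; push_cast; ring⟩
  · refine ⟨k * δ, hkδ, fun x hx ↦ ?_⟩
    obtain ⟨a, b, ha, ⟨b, rfl⟩, hx2⟩ := hsplit x hx
    obtain ⟨a, rfl⟩ := hkdm.trans ha
    exact ⟨b, a, by rw [hx2]; push_cast; linear_combination -(k * a : O) * hδ⟩

theorem isPrincipal_of_map_eq_self [IsDedekindDomain O] [CharZero O] {p : ℕ} (hp : p.Prime)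
    {δ : O} (hδ : δ ^ 2 = (p : ℤ)) {I : Ideal O} (hI : I.map σ = I) : I.IsPrincipal := by
  obtain ⟨γ, hγI, hγ⟩ :=
    hσ.exists_mem_forall_two_mul_eq (Nat.prime_iff_prime_int.mp hp) hδ hI
  exact isPrincipal_of_forall_two_mul_eq hp hδ hγI hγ

theorem eq_zero_of_mul_apply_eq_neg_sq [IsDomain O] [CharZero O] {p : ℕ} (hp : p.Prime)
    (hp4 : p % 4 = 3) {δ : O} (hδ : δ ^ 2 = (p : ℤ)) {x : O} {n : ℤ}
    (hx : x * σ x = -(n : O) ^ 2) : n = 0 := by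
  have hpZ : Prime (p : ℤ) := Nat.prime_iff_prime_int.mp hp
  have hσδ : σ δ = -δ := hσ.apply_eq_neg_of_sq_eq hpZ.irreducible.not_isSquare hδ
  obtain ⟨t, ht⟩ := hσ.exists_add_apply_eq x
  obtain ⟨b, hb⟩ := hσ.exists_sub_apply_eq hpZ.squarefree hδ hσδ x
  have hsum : t ^ 2 + (2 * n) ^ 2 = p * b ^ 2 := by
    apply Int.cast_injective (α := O)
    push_cast at hδ ⊢
    rw [← hδ, ← ht]
    linear_combination (x - σ x + b * δ) * hb + 4 * hx
  obtain rfl : b = 0 := eq_zero_of_sq_add_sq_eq_prime_mul_sq hp hp4 hsum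
  nlinarith [sq_nonneg t, sq_nonneg n]

theorem exists_isUnit_mul_apply_eq_neg_one [IsDomain O] [CharZero O] {p : ℕ} (hp : p.Prime)
    (hp4 : p % 4 ≠ 3) {δ : O} (hδ : δ ^ 2 = (p : ℤ)) : ∃ ε : O, IsUnit ε ∧ ε * σ ε = -1 := by
  have hσδ : σ δ = -δ :=
    hσ.apply_eq_neg_of_sq_eq (Nat.prime_iff_prime_int.mp hp).irreducible.not_isSquare hδ
  obtain ⟨a, b, hab⟩ := exists_sq_sub_mul_sq_eq_neg_one hp hp4
  have hab' : (a : O) ^ 2 - p * b ^ 2 = -1 := by exact_mod_cast congrArg (Int.cast : ℤ → O) hab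
  have hε : ((a : O) + b * δ) * σ (a + b * δ) = -1 := by
    rw [map_add, map_mul, map_intCast, map_intCast, hσδ]
    push_cast at hδ
    linear_combination hab' - (b : O) ^ 2 * hδ
  exact ⟨a + b * δ, isUnit_of_mul_isUnit_left (hε ▸ isUnit_one.neg), hε⟩

theorem exists_sq_eq_span_and_mul_apply_eq [IsDedekindDomain O]
    [Algebra.IsQuadraticExtension ℤ O] {p : ℕ} (hp : p.Prime) {δ : O} (hδ : δ ^ 2 = (p : ℤ))
    {I : Ideal O} (hI : (I ^ 2).IsPrincipal) :
    ∃ (x : O) (n : ℤ), I ^ 2 = Ideal.span {x} ∧ x * σ x = (n : O) ^ 2 := by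
  have : CharZero O := Algebra.charZero_of_charZero ℤ O
  obtain ⟨x, hx : I ^ 2 = Ideal.span {x}⟩ := hI
  obtain ⟨m, hm⟩ := hσ.exists_mul_apply_eq x
  have hnorm : m.natAbs = Ideal.absNorm I ^ 2 := by
    rw [← absNorm_span_singleton_of_mul_apply_eq σ hm, ← hx, map_pow]
  obtain ⟨n, rfl | rfl⟩ : ∃ n : ℤ, m = n ^ 2 ∨ m = -n ^ 2 :=
    ⟨Ideal.absNorm I, by exact_mod_cast Int.natAbs_eq_iff.mp hnorm⟩
  · exact ⟨x, n, hx, by exact_mod_cast hm⟩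
  push_cast at hm
  by_cases hp4 : p % 4 = 3
  · obtain rfl : n = 0 := hσ.eq_zero_of_mul_apply_eq_neg_sq hp hp4 hδ hm
    exact ⟨x, 0, hx, by simpa using hm⟩
  · obtain ⟨ε, hε, hεσ⟩ := hσ.exists_isUnit_mul_apply_eq_neg_one hp hp4 hδ
    refine ⟨ε * x, n, by rw [hx, Ideal.span_singleton_mul_left_unit hε], ?_⟩
    rw [map_mul]
    linear_combination x * σ x * hεσ - hm

theorem isPrincipal_of_isPrincipal_sq [IsDedekindDomain O]
    [Algebra.IsQuadraticExtension ℤ O] {p : ℕ} (hp : p.Prime) {δ : O} (hδ : δ ^ 2 = (p : ℤ))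
    {I : Ideal O} (hI : (I ^ 2).IsPrincipal) : I.IsPrincipal := by
  have : CharZero O := Algebra.charZero_of_charZero ℤ O
  obtain ⟨x, n, hx, hnorm⟩ := hσ.exists_sq_eq_span_and_mul_apply_eq hp hδ hI
  obtain ⟨β, hβ, hmap⟩ := hσ.exists_ne_zero_map_span_mul_eq hx hnorm
  exact isPrincipal_of_isPrincipal_span_singleton_mul hβ
    (hσ.isPrincipal_of_map_eq_self hp hδ hmap)

end IsQuadraticConj

theorem exists_isQuadraticConj (G O : Type*) [Group G] [CommRing O] [MulSemiringAction G O]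
    [IsGaloisGroup G ℤ O] (hG : Nat.card G = 2) : ∃ σ : O ≃+* O, IsQuadraticConj σ := by
  obtain ⟨g, -, hg⟩ := (Nat.card_eq_two_iff' (1 : G)).mp hG
  refine ⟨MulSemiringAction.toRingEquiv G O g, fun x ↦ ?_, fun x hx ↦ ?_⟩
  · change g • g • x = x
    rw [smul_smul, ← sq, ← hG, pow_card_eq_one', one_smul]
  · have hfix : ∀ h : G, h • x = x := fun h ↦ by
      obtain rfl | hne := eq_or_ne h 1
      · exact one_smul G x
      · rw [hg h hne]
        exact hx
    obtain ⟨n, hn⟩ := Algebra.IsInvariant.isInvariant (A := ℤ) x hfix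
    exact ⟨n, by simpa using hn.symm⟩

theorem odd_classNumber_of_forall_isPrincipal {K : Type*} [Field K] [NumberField K]
    (h : ∀ I : Ideal (𝓞 K), (I ^ 2).IsPrincipal → I.IsPrincipal) :
    Odd (NumberField.classNumber K) := by
  rw [← Nat.not_even_iff_odd, even_iff_two_dvd]
  intro htwo
  obtain ⟨g, hg⟩ := exists_prime_orderOf_dvd_card (G := ClassGroup (𝓞 K)) 2 htwo
  obtain ⟨⟨I, hI⟩, rfl⟩ := ClassGroup.mk0_surjective g
  have hsq : (I ^ 2).IsPrincipal := by
    rw [← ClassGroup.mk0_eq_one_iff (pow_mem hI 2), ← SubmonoidClass.mk_pow, map_pow, ← hg]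
    exact pow_orderOf_eq_one _
  rw [(ClassGroup.mk0_eq_one_iff hI).mpr (h I hsq), orderOf_one] at hg
  exact absurd hg (by decide)

/-- For every prime `p`, the class number of the real quadratic field `ℚ(√p)`
(formalized as any degree-2 number field containing a square root of `p`) is odd. -/
theorem odd_classNumber_of_sqrt_prime
    (p : ℕ) (hp : p.Prime)
    (K : Type) [Field K] [NumberField K]
    (hdeg : Module.finrank ℚ K = 2)
    (α : K) (hα : α ^ 2 = (p : K)) :
    Odd (NumberField.classNumber K) := by
  have : Algebra.IsQuadraticExtension ℚ K := ⟨hdeg⟩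
  have : Algebra.IsQuadraticExtension ℤ (𝓞 K) := ⟨by rw [RingOfIntegers.rank, hdeg]⟩
  obtain ⟨σ, hσ⟩ := exists_isQuadraticConj Gal(K/ℚ) (𝓞 K)
    ((IsGaloisGroup.card_eq_finrank Gal(K/ℚ) ℚ K).trans hdeg)
  have hint : IsIntegral ℤ α := .of_pow two_pos (hα ▸ isIntegral_natCast p)
  obtain ⟨δ, rfl⟩ : ∃ δ : 𝓞 K, (δ : K) = α := ⟨⟨α, hint⟩, rfl⟩
  have hδ : δ ^ 2 = (p : ℤ) := RingOfIntegers.ext (by simpa using hα)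
  exact odd_classNumber_of_forall_isPrincipal fun I ↦ hσ.isPrincipal_of_isPrincipal_sq hp hδ
end

section
/- For distinct primes p and q with p ≡ 3 (mod 4) and q ≡ 3 (mod 4), the class number of the real quadratic field ℚ(√(pq)) is odd. -/
open NumberField

/-!
The class number is odd iff every ideal `I` with `I ^ 2 = (x)` principal is itself principal. Write
`d = p * q`. From `I ^ 2 = (x)` we get `N(x) = ±n ^ 2`, and the sign is `+`: the norm has the form
`a ^ 2 - d * b ^ 2`, and `a ^ 2 + n ^ 2 = d * b ^ 2` is impossible because `p ≡ 3 (mod 4)` divides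
`d` to an odd power. Hilbert 90 then makes `x` a rational integer times a square, so up to
equivalence `I ^ 2 = (m)` with `m` a squarefree natural number. The primes dividing `m` ramify and
`d ≡ 1 (mod 4)` puts `√d` in the different, so `m ∣ d`.

If `d = m * b` and `m * r ^ 2 - b * s ^ 2 = ±1`, then `m * r + s * √d` generates `I`. For
`{m, b} = {p, q}` such `r, s` come from the fundamental solution of Pell's equation
`x ^ 2 - d * y ^ 2 = 1`: writing `x = 2 * u + 1`, `y = 2 * w` gives `u * (u + 1) = d * w ^ 2`, which
splits `d` into the part dividing `u` and the part dividing `u + 1`. The trivial splitting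
`u + 1 = s ^ 2` contradicts minimality, and `u = r ^ 2` is excluded by `p ≡ 3 (mod 4)`.
-/

section Arithmetic

theorem exists_eq_mul_sq_of_coprime_of_mul_eq_mul_sq {u v d w : ℕ} (hd : d ≠ 0)
    (huv : u.Coprime v) (h : u * v = d * w ^ 2) :
    ∃ a b r s : ℕ, a * b = d ∧ u = a * r ^ 2 ∧ v = b * s ^ 2 := by
  have hgcd : d.gcd u * d.gcd v = d := by
    rw [← huv.gcd_mul, Nat.gcd_eq_left ⟨w ^ 2, h⟩]
  obtain ⟨u', hu'⟩ := d.gcd_dvd_right u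
  obtain ⟨v', hv'⟩ := d.gcd_dvd_right v
  have hcop : u'.Coprime v' :=
    (huv.coprime_dvd_left (Dvd.intro_left _ hu'.symm)).coprime_dvd_right (Dvd.intro_left _ hv'.symm)
  have hsq : u' * v' = w ^ 2 := by
    refine Nat.eq_of_mul_eq_mul_left (Nat.pos_of_ne_zero hd) ?_
    calc d * (u' * v') = d.gcd u * d.gcd v * (u' * v') := by rw [hgcd]
      _ = (d.gcd u * u') * (d.gcd v * v') := by ring
      _ = d * w ^ 2 := by rw [← hu', ← hv', h]
  obtain ⟨r, hr⟩ := exists_eq_pow_of_mul_eq_pow (Nat.isUnit_iff.2 hcop) hsq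
  obtain ⟨s, hs⟩ := exists_eq_pow_of_mul_eq_pow (Nat.isUnit_iff.2 hcop.symm)
    ((mul_comm _ _).trans hsq)
  exact ⟨_, _, r, s, hgcd, hr ▸ hu', hs ▸ hv'⟩

theorem nat_sq_add_sq_ne_mul_sq {p d : ℕ} (hp : p.Prime) (hp4 : p % 4 = 3)
    (hd : Odd (padicValNat p d)) {a b c : ℕ} (hc : c ≠ 0) : a ^ 2 + c ^ 2 ≠ d * b ^ 2 := by
  intro h
  have : Fact p.Prime := ⟨hp⟩
  have hne : d * b ^ 2 ≠ 0 := by rw [← h]; positivity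
  obtain ⟨hd0, hb0⟩ := mul_ne_zero_iff.1 hne
  have hpd : p ∣ d := dvd_of_one_le_padicValNat hd.pos
  have heven : Even (padicValNat p (d * b ^ 2)) :=
    Nat.eq_sq_add_sq_iff.1 ⟨a, c, h.symm⟩ p
      (Nat.mem_primeFactors.2 ⟨hp, hpd.mul_right _, hne⟩) hp4
  rw [padicValNat.mul hd0 hb0, padicValNat.pow] at heven
  exact Nat.not_even_iff_odd.2 (hd.add_even (even_two_mul _)) heven

theorem rat_sq_add_sq_ne_mul_sq {p d : ℕ} (hp : p.Prime) (hp4 : p % 4 = 3)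
    (hd : Odd (padicValNat p d)) {a b c : ℚ} (hc : c ≠ 0) : a ^ 2 + c ^ 2 ≠ d * b ^ 2 := by
  intro h
  have hcleared : (a.num * b.den * c.den).natAbs ^ 2 + (c.num * a.den * b.den).natAbs ^ 2 =
      d * (b.num * a.den * c.den).natAbs ^ 2 := by
    zify
    simp only [sq_abs]
    rw [← a.num_div_den, ← b.num_div_den, ← c.num_div_den] at h
    field_simp at h
    norm_cast at h
    push_cast at h
    linear_combination h
  exact nat_sq_add_sq_ne_mul_sq hp hp4 hd (by simpa using hc) hcleared

theorem not_isSquare_of_odd_padicValNat {p d : ℕ} (hp : p.Prime) (hd : Odd (padicValNat p d)) :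
    ¬ IsSquare d := by
  have : Fact p.Prime := ⟨hp⟩
  rintro ⟨r, rfl⟩
  have hr : r ≠ 0 := by rintro rfl; simp at hd
  rw [padicValNat.mul hr hr] at hd
  exact Nat.not_even_iff_odd.2 hd ⟨_, rfl⟩

theorem exists_mul_succ_eq_mul_sq_of_sq_sub_mul_sq_eq_one {d : ℕ} (hd4 : d % 4 = 1) {x y : ℤ}
    (hx : 1 < x) (h : x ^ 2 - d * y ^ 2 = 1) :
    ∃ u w : ℕ, x = 2 * u + 1 ∧ u * (u + 1) = d * w ^ 2 := by
  obtain ⟨k, rfl⟩ : ∃ k, d = 4 * k + 1 := ⟨d / 4, by omega⟩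
  push_cast at h
  obtain ⟨u, rfl⟩ | ⟨u, rfl⟩ := x.even_or_odd <;> obtain ⟨w, rfl⟩ | ⟨w, rfl⟩ := y.even_or_odd
  case inr.inl =>
    lift u to ℕ using by omega
    refine ⟨u, w.natAbs, rfl, ?_⟩
    zify
    rw [sq_abs]
    refine mul_left_cancel₀ four_ne_zero ?_
    linear_combination h
  all_goals ring_nf at h; omega

theorem exists_mul_eq_and_mul_sq_add_one_eq_mul_sq {d : ℕ} (hd4 : d % 4 = 1) (hd : ¬ IsSquare d) :
    ∃ a b r s : ℕ, a * b = d ∧ a * r ^ 2 + 1 = b * s ^ 2 ∧ b ≠ 1 := by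
  have hd0 : d ≠ 0 := by rintro rfl; simp at hd4
  obtain ⟨ε, hε⟩ := Pell.IsFundamental.exists_of_not_isSquare (d := d) (by positivity)
    (by rwa [Int.isSquare_natCast_iff])
  obtain ⟨u, w, hxu, huw⟩ :=
    exists_mul_succ_eq_mul_sq_of_sq_sub_mul_sq_eq_one hd4 hε.1 ε.prop
  obtain ⟨a, b, r, s, hab, hur, hus⟩ := exists_eq_mul_sq_of_coprime_of_mul_eq_mul_sq hd0
    (Nat.coprime_self_add_right.2 u.coprime_one_right) huw
  refine ⟨a, b, r, s, hab, by rw [← hur, hus], ?_⟩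
  rintro rfl
  -- Otherwise `(s, r)` would be a Pell solution smaller than the fundamental one.
  obtain rfl : a = d := by simpa using hab
  have hu : 0 < u := by have := hε.1; omega
  have hs : 1 < s := by nlinarith
  have hprop : (s : ℤ) ^ 2 - a * (r : ℤ) ^ 2 = 1 := by
    have : a * r ^ 2 + 1 = s ^ 2 := by omega
    zify at this
    linear_combination -this
  have hle : ε.x ≤ s := hε.x_le_x (a := .mk s r hprop) (by simpa using hs)
  have : 2 * u + 1 ≤ s := by omega
  nlinarith

theorem mul_eq_prime_mul_prime_iff {p q a b : ℕ} (hp : p.Prime) (hq : q.Prime) :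
    a * b = p * q ↔
      (a = 1 ∧ b = p * q) ∨ (a = p ∧ b = q) ∨ (a = q ∧ b = p) ∨ (a = p * q ∧ b = 1) := by
  refine ⟨fun h ↦ ?_, by rintro (⟨rfl, rfl⟩ | ⟨rfl, rfl⟩ | ⟨rfl, rfl⟩ | ⟨rfl, rfl⟩) <;> ring⟩
  have hp0 := hp.pos
  have hq0 := hq.pos
  obtain ⟨x, y, hx, hy, rfl⟩ := Nat.dvd_mul.1 (Dvd.intro b h)
  rcases (Nat.dvd_prime hp).1 hx with rfl | rfl <;> rcases (Nat.dvd_prime hq).1 hy with rfl | rfl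
  · simp_all
  · have : b = p := by nlinarith
    simp_all
  · have : b = q := by nlinarith
    simp_all
  · have : b = 1 := Nat.eq_of_mul_eq_mul_left (by positivity) (h.trans (mul_one _).symm)
    simp_all

theorem odd_padicValNat_mul_of_ne {p q : ℕ} (hp : p.Prime) (hq : q.Prime) (hpq : p ≠ q) :
    Odd (padicValNat p (p * q)) := by
  have : Fact p.Prime := ⟨hp⟩
  have : Fact q.Prime := ⟨hq⟩
  rw [padicValNat.mul hp.ne_zero hq.ne_zero, padicValNat_self, padicValNat_primes hpq]
  exact odd_one

theorem exists_isUnit_prime_mul_sq_sub_prime_mul_sq {p q : ℕ} (hp : p.Prime) (hq : q.Prime)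
    (hpq : p ≠ q) (hp4 : p % 4 = 3) (hq4 : q % 4 = 3) :
    ∃ r s : ℤ, IsUnit (p * r ^ 2 - q * s ^ 2) := by
  have hodd := odd_padicValNat_mul_of_ne hp hq hpq
  have hd4 : p * q % 4 = 1 := by simp [Nat.mul_mod, hp4, hq4]
  obtain ⟨a, b, r, s, hab, hrs, hb⟩ :=
    exists_mul_eq_and_mul_sq_add_one_eq_mul_sq hd4 (not_isSquare_of_odd_padicValNat hp hodd)
  obtain ⟨rfl, rfl⟩ | ⟨rfl, rfl⟩ | ⟨rfl, rfl⟩ | ⟨rfl, rfl⟩ :=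
    (mul_eq_prime_mul_prime_iff hp hq).1 hab
  · exact (nat_sq_add_sq_ne_mul_sq hp hp4 hodd one_ne_zero (by simpa using hrs)).elim
  · zify at hrs
    exact ⟨r, s, Int.isUnit_iff.2 (.inr (by linear_combination hrs))⟩
  · zify at hrs
    exact ⟨s, r, Int.isUnit_iff.2 (.inl (by linear_combination -hrs))⟩
  · exact (hb rfl).elim

theorem exists_isUnit_mul_sq_sub_mul_sq_of_mul_eq {p q a b : ℕ} (hp : p.Prime) (hq : q.Prime)
    (hpq : p ≠ q) (hp4 : p % 4 = 3) (hq4 : q % 4 = 3) (hab : a * b = p * q) :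
    ∃ r s : ℤ, IsUnit (a * r ^ 2 - b * s ^ 2) := by
  obtain ⟨rfl, rfl⟩ | ⟨rfl, rfl⟩ | ⟨rfl, rfl⟩ | ⟨rfl, rfl⟩ :=
    (mul_eq_prime_mul_prime_iff hp hq).1 hab
  · exact ⟨1, 0, by simp⟩
  · exact exists_isUnit_prime_mul_sq_sub_prime_mul_sq hp hq hpq hp4 hq4
  · exact exists_isUnit_prime_mul_sq_sub_prime_mul_sq hq hp hpq.symm hq4 hp4
  · exact ⟨0, 1, by simp⟩

end Arithmetic

section QuadraticExtension

theorem sq_sub_trace_mul_add_norm_eq_zero {R S : Type*} [CommRing R] [Nontrivial R] [CommRing S]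
    [Algebra R S] [Module.Free R S] (hrank : Module.finrank R S = 2) (x : S) :
    x ^ 2 - algebraMap R S (Algebra.trace R S x) * x + algebraMap R S (Algebra.norm R x) = 0 := by
  have : Module.Finite R S := Module.finite_of_finrank_eq_succ hrank
  let B := Module.finBasisOfFinrankEq R S hrank
  apply Algebra.leftMulMatrix_injective B
  have hcayley := Matrix.aeval_self_charpoly (Algebra.leftMulMatrix B x)
  rw [Matrix.charpoly_fin_two, ← Algebra.trace_eq_matrix_trace,
    ← Algebra.norm_eq_matrix_det] at hcayley
  simpa [AlgHom.commutes] using hcayley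

theorem exists_sq_eq_algebraMap_mul_of_norm_eq_sq {R S : Type*} [CommRing R] [Nontrivial R]
    [CommRing S] [Algebra R S] [Module.Free R S] (hrank : Module.finrank R S = 2)
    {x : S} (hx : x ≠ 0) {n : R} (hn : Algebra.norm R x = n ^ 2) :
    ∃ (m : R) (y : S), y ≠ 0 ∧ y ^ 2 = algebraMap R S m * x := by
  by_cases hy : x + algebraMap R S n = 0
  · exact ⟨-n, x, hx, by rw [map_neg]; linear_combination x * hy⟩
  · -- Hilbert 90, made explicit: `(x + n) ^ 2 = (Tr x + 2 * n) * x`.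
    refine ⟨Algebra.trace R S x + 2 * n, _, hy, ?_⟩
    have hquad := sq_sub_trace_mul_add_norm_eq_zero hrank x
    rw [hn, map_pow] at hquad
    rw [map_add, map_mul, map_ofNat]
    linear_combination hquad

theorem exists_norm_eq_sq_sub_mul_sq {F L : Type*} [Field F] [Field L] [Algebra F L]
    (hdeg : Module.finrank F L = 2) {d : F} (hd : ¬ IsSquare d) {α : L}
    (hα : α ^ 2 = algebraMap F L d) (z : L) :
    ∃ a b : F, Algebra.norm F z = a ^ 2 - d * b ^ 2 := by
  have : Fact (∀ r : F, r ^ 2 ≠ d + 0 * r) := ⟨fun r hr ↦ hd ⟨r, by linear_combination -hr⟩⟩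
  have : Module.Finite F L := Module.finite_of_finrank_eq_succ hdeg
  let φ : QuadraticAlgebra F d 0 →ₐ[F] L :=
    QuadraticAlgebra.lift ⟨α, by simp [← sq, hα, Algebra.smul_def]⟩
  have hφ : Function.Bijective φ :=
    ⟨φ.injective, (LinearMap.injective_iff_surjective_of_finrank_eq_finrank
      (f := φ.toLinearMap) (by rw [hdeg, QuadraticAlgebra.finrank_eq_two])).1 φ.injective⟩
  obtain ⟨w, rfl⟩ := hφ.2 z
  refine ⟨w.re, w.im, ?_⟩
  calc Algebra.norm F (φ w) = Algebra.norm F w :=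
        Algebra.norm_eq_of_algEquiv (.ofBijective φ hφ) w
    _ = w.norm := QuadraticAlgebra.det_toLinearMap_eq_norm w
    _ = w.re ^ 2 - d * w.im ^ 2 := by rw [QuadraticAlgebra.norm_def]; ring

theorem adjoin_singleton_eq_top_of_finrank_prime {F L : Type*} [Field F] [Field L] [Algebra F L]
    (hdeg : (Module.finrank F L).Prime) {x : L} (hx : x ∉ (⊥ : Subalgebra F L)) :
    Algebra.adjoin F {x} = ⊤ := by
  have := Subalgebra.isSimpleOrder_of_finrank_prime F L hdeg
  exact (eq_bot_or_eq_top _).resolve_left fun h ↦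
    hx (h ▸ Algebra.self_mem_adjoin_singleton F x)

end QuadraticExtension

section DedekindDomain

theorem isPrincipal_of_span_singleton_mul_eq_span_singleton {R : Type*} [CommRing R]
    [IsDomain R] {a b : R} {I : Ideal R} (ha : a ≠ 0)
    (h : Ideal.span {a} * I = Ideal.span {b}) : I.IsPrincipal := by
  obtain ⟨c, -, rfl⟩ := Ideal.mem_span_singleton_mul.1 (h ▸ Ideal.mem_span_singleton_self b)
  rw [← Ideal.span_singleton_mul_span_singleton, Ideal.span_singleton_mul_right_inj ha] at h
  exact ⟨c, h⟩

variable {R : Type*} [CommRing R] [IsDedekindDomain R]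

theorem isPrincipal_of_sq_eq_mul_of_forall_sq_eq_span {I : Ideal R} {x m y : R}
    (hI : I ^ 2 = Ideal.span {x}) (hy : y ≠ 0) (hxm : y ^ 2 = m * x)
    (h : ∀ J : Ideal R, J ^ 2 = Ideal.span {m} → J.IsPrincipal) : I.IsPrincipal := by
  have hmI : (Ideal.span {m} * I) ^ 2 = Ideal.span {y} ^ 2 * Ideal.span {m} := by
    simp only [mul_pow, hI, Ideal.span_singleton_pow, Ideal.span_singleton_mul_span_singleton, hxm]
    ring_nf
  obtain ⟨J, hJ⟩ : Ideal.span {y} ∣ Ideal.span {m} * I :=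
    (UniqueFactorizationMonoid.pow_dvd_pow_iff_dvd two_ne_zero).1 ⟨_, hmI⟩
  have hJm : J ^ 2 = Ideal.span {m} := by
    rw [hJ, mul_pow, Ideal.span_singleton_pow] at hmI
    exact (Ideal.span_singleton_mul_right_inj (pow_ne_zero 2 hy)).1 hmI
  obtain ⟨c, rfl⟩ := h J hJm
  have hm : m ≠ 0 := by
    rintro rfl
    exact pow_ne_zero 2 hy (hxm.trans (zero_mul x))
  rw [Ideal.submodule_span_eq, Ideal.span_singleton_mul_span_singleton] at hJ
  exact isPrincipal_of_span_singleton_mul_eq_span_singleton hm hJ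

theorem isPrincipal_of_sq_eq_span_of_isUnit_mul_sq_sub_mul_sq {a b α r s : R}
    (hα : α ^ 2 = a * b) (hrs : IsUnit (a * r ^ 2 - b * s ^ 2)) {J : Ideal R}
    (hJ : J ^ 2 = Ideal.span {a}) : J.IsPrincipal := by
  have hunit : IsUnit (a * r ^ 2 + b * s ^ 2 + 2 * r * s * α) := by
    refine isUnit_of_mul_isUnit_left (y := a * r ^ 2 + b * s ^ 2 - 2 * r * s * α) ?_
    convert hrs.pow 2 using 1
    linear_combination -4 * r ^ 2 * s ^ 2 * hα
  have hgen : (a * r + s * α) ^ 2 = a * (a * r ^ 2 + b * s ^ 2 + 2 * r * s * α) := by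
    linear_combination s ^ 2 * hα
  refine ⟨a * r + s * α, (pow_left_inj two_ne_zero).1 ?_⟩
  rw [hJ, Ideal.submodule_span_eq, Ideal.span_singleton_pow, hgen,
    Ideal.span_singleton_mul_right_unit hunit]

theorem odd_card_classGroup_of_forall_sq_eq_span [Finite (ClassGroup R)]
    (h : ∀ (I : Ideal R) (x : R), x ≠ 0 → I ^ 2 = Ideal.span {x} → I.IsPrincipal) :
    Odd (Nat.card (ClassGroup R)) := by
  refine MonoidHom.FixedPointFree.odd_card_of_involutive (φ := MulEquiv.inv (ClassGroup R))
    (fun c hc ↦ ?_) inv_inv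
  obtain ⟨I, rfl⟩ := ClassGroup.mk0_surjective c
  obtain ⟨x, hx0, hx⟩ := ClassGroup.mk0_eq_mk0_inv_iff.1 hc.symm
  exact (ClassGroup.mk0_eq_one_iff I.2).2 (h I x hx0 (by rw [sq, hx]))

end DedekindDomain

section Different

open Polynomial

theorem aeval_derivative_mem_differentIdeal_of_aeval_eq_zero (A K L : Type*) {B : Type*}
    [CommRing A] [Field K] [CommRing B] [Field L] [Algebra A K] [Algebra B L] [Algebra A B]
    [Algebra K L] [Algebra A L] [IsScalarTower A K L] [IsScalarTower A B L] [IsDomain A]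
    [IsFractionRing A K] [FiniteDimensional K L] [Algebra.IsSeparable K L]
    [IsIntegralClosure B A L] [IsIntegrallyClosed A] [IsDedekindDomain B]
    [Module.IsTorsionFree A B] {x : B} (hx : Algebra.adjoin K {algebraMap B L x} = ⊤) {f : A[X]}
    (hf : aeval x f = 0) : aeval x (derivative f) ∈ differentIdeal A B := by
  have hint : IsIntegral A x := IsIntegralClosure.isIntegral A L x
  obtain ⟨g, rfl⟩ := minpoly.isIntegrallyClosed_dvd hint hf
  rw [derivative_mul, map_add, map_mul, map_mul, minpoly.aeval, zero_mul, add_zero]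
  exact Ideal.mul_mem_right _ _ (aeval_derivative_mem_differentIdeal A K L x hx)

attribute [local instance] FractionRing.liftAlgebra

variable {A B : Type*} [CommRing A] [IsDedekindDomain A] [CommRing B] [IsDedekindDomain B]
  [Algebra A B] [Module.IsTorsionFree A B] [Module.Finite A B]
  [Algebra.IsSeparable (FractionRing A) (FractionRing B)]

theorem dvd_differentIdeal_of_sq_eq_span {l k : A} (hl : Prime l) (hlk : IsCoprime l k)
    {J P : Ideal B} [P.IsPrime] (hP : algebraMap A B l ∈ P)
    (hJ : J ^ 2 = Ideal.span {algebraMap A B (l * k)}) : P ∣ differentIdeal A B := by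
  have hPJ : P ∣ J := by
    refine Ideal.dvd_iff_le.2 (Ideal.IsPrime.le_of_pow_le (n := 2) ?_)
    rw [hJ, Ideal.span_singleton_le_iff_mem, map_mul]
    exact P.mul_mem_right _ hP
  have hPk : IsCoprime P (Ideal.span {algebraMap A B k}) := by
    rw [Ideal.isCoprime_iff_sup_eq, Ideal.eq_top_iff_one]
    obtain ⟨u, v, huv⟩ := hlk.map (algebraMap A B)
    rw [← huv]
    exact Submodule.add_mem_sup (P.mul_mem_left u hP)
      (Ideal.mul_mem_left _ v (Ideal.mem_span_singleton_self _))
  have hPl : P ^ 2 ∣ (Ideal.span {l}).map (algebraMap A B) := by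
    rw [Ideal.map_span, Set.image_singleton]
    refine hPk.pow_left.dvd_of_dvd_mul_right ?_
    rw [Ideal.span_singleton_mul_span_singleton, ← map_mul, ← hJ]
    exact pow_dvd_pow_of_dvd hPJ 2
  have hl_bot : Ideal.span {l} ≠ ⊥ := by simpa using hl.ne_zero
  have : (Ideal.span {l}).IsMaximal :=
    ((Ideal.span_singleton_prime hl.ne_zero).2 hl).isMaximal hl_bot
  simpa using pow_sub_one_dvd_differentIdeal A P 2 hl_bot hPl

theorem prime_dvd_of_sq_eq_span_of_mem_differentIdeal {l k d : A} (hl : Prime l)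
    (hlk : IsCoprime l k) {J : Ideal B} (hJ : J ^ 2 = Ideal.span {algebraMap A B (l * k)})
    {δ : B} (hδ : δ ∈ differentIdeal A B) (hd : δ ∣ algebraMap A B d) : l ∣ d := by
  have : (Ideal.span {l}).IsMaximal :=
    ((Ideal.span_singleton_prime hl.ne_zero).2 hl).isMaximal (by simpa using hl.ne_zero)
  obtain ⟨P, hPmax, hPl⟩ :=
    Ideal.exists_maximal_ideal_liesOver_of_isIntegral (S := B) (Ideal.span {l})
  have hmem (x : A) : l ∣ x ↔ algebraMap A B x ∈ P := by
    rw [← Ideal.mem_span_singleton, Ideal.mem_of_liesOver P (Ideal.span {l})]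
  have hδP : δ ∈ P :=
    Ideal.dvd_iff_le.1 (dvd_differentIdeal_of_sq_eq_span hl hlk ((hmem l).1 dvd_rfl) hJ) hδ
  exact (hmem d).2 (P.mem_of_dvd hd hδP)

end Different

section NumberField

open Polynomial

variable {K : Type*} [Field K] [NumberField K]

theorem dvd_of_sq_eq_span_natCast_of_mem_differentIdeal {m d : ℕ} (hm : Squarefree m)
    {J : Ideal (𝓞 K)} (hJ : J ^ 2 = Ideal.span {(m : 𝓞 K)}) {δ : 𝓞 K}
    (hδ : δ ∈ differentIdeal ℤ (𝓞 K)) (hd : δ ∣ d) : m ∣ d := by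
  rw [← Nat.prod_primeFactors_of_squarefree hm]
  refine Finset.prod_primes_dvd d (fun l hl ↦ (Nat.prime_of_mem_primeFactors hl).prime)
    fun l hl ↦ ?_
  obtain ⟨k, rfl⟩ := Nat.dvd_of_mem_primeFactors hl
  have hl' : Prime (l : ℤ) := Nat.prime_iff_prime_int.1 (Nat.prime_of_mem_primeFactors hl)
  have hlk : IsCoprime (l : ℤ) k := Nat.isCoprime_iff_coprime.2 (Nat.coprime_of_squarefree_mul hm)
  have : (l : ℤ) ∣ d := prime_dvd_of_sq_eq_span_of_mem_differentIdeal hl' hlk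
    (by simpa using hJ) hδ (by simpa using hd)
  exact_mod_cast this

theorem exists_two_mul_sub_one_eq_of_sq_eq {d : ℕ} (hd4 : d % 4 = 1) {α : 𝓞 K}
    (hα : α ^ 2 = d) : ∃ θ : 𝓞 K, 2 * θ - 1 = α := by
  obtain ⟨k, rfl⟩ : ∃ k, d = 4 * k + 1 := ⟨d / 4, by omega⟩
  have hαK : algebraMap (𝓞 K) K α ^ 2 = 4 * k + 1 := by
    rw [← map_pow, hα, map_natCast, Nat.cast_add_one, Nat.cast_mul, Nat.cast_ofNat]
  have hroot : eval₂ (algebraMap ℤ K) ((1 + α : K) / 2) (X ^ 2 - X - C (k : ℤ)) = 0 := by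
    simp only [eval₂_sub, eval₂_X_pow, eval₂_X, map_natCast, eval₂_natCast]
    linear_combination hαK / 4
  refine ⟨⟨(1 + α) / 2, X ^ 2 - X - C (k : ℤ), by monicity!, hroot⟩, RingOfIntegers.ext ?_⟩
  change 2 * ((1 + α : K) / 2) - 1 = α
  ring

theorem mem_differentIdeal_of_sq_eq (hdeg : Module.finrank ℚ K = 2) {d : ℕ} (hd4 : d % 4 = 1)
    (hd : ¬ IsSquare d) {α : 𝓞 K} (hα : α ^ 2 = d) : α ∈ differentIdeal ℤ (𝓞 K) := by
  obtain ⟨θ, rfl⟩ := exists_two_mul_sub_one_eq_of_sq_eq hd4 hα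
  have hgen : Algebra.adjoin ℚ {algebraMap (𝓞 K) K θ} = ⊤ := by
    refine adjoin_singleton_eq_top_of_finrank_prime (hdeg ▸ Nat.prime_two) fun hbot ↦ hd ?_
    obtain ⟨r, hr⟩ := Algebra.mem_bot.1 hbot
    have hr2 : (2 * r - 1) ^ 2 = (d : ℚ) := by
      apply (algebraMap ℚ K).injective
      rw [map_natCast, ← map_natCast (algebraMap (𝓞 K) K), ← hα]
      simp only [map_pow, map_sub, map_mul, map_one, map_ofNat, hr]
    rw [← Rat.isSquare_natCast_iff]
    exact ⟨2 * r - 1, by rw [← hr2, sq]⟩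
  obtain ⟨k, rfl⟩ : ∃ k, d = 4 * k + 1 := ⟨d / 4, by omega⟩
  push_cast at hα
  have hroot : aeval θ (X ^ 2 - X - C (k : ℤ)) = 0 := by
    refine mul_left_cancel₀ (by norm_num : (4 : 𝓞 K) ≠ 0) ?_
    simp only [map_sub, map_pow, aeval_X, map_natCast]
    linear_combination hα
  simpa [map_ofNat] using aeval_derivative_mem_differentIdeal_of_aeval_eq_zero ℤ ℚ K hgen hroot

theorem exists_norm_eq_sq_of_sq_eq_span (hdeg : Module.finrank ℚ K = 2) {p d : ℕ}
    (hp : p.Prime) (hp4 : p % 4 = 3) (hd : Odd (padicValNat p d)) {α : 𝓞 K} (hα : α ^ 2 = d)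
    {I : Ideal (𝓞 K)} {x : 𝓞 K} (hx : x ≠ 0) (hI : I ^ 2 = Ideal.span {x}) :
    ∃ n : ℤ, Algebra.norm ℤ x = n ^ 2 := by
  have habs : |Algebra.norm ℤ x| = (I.absNorm : ℤ) ^ 2 := by
    rw [Int.abs_eq_natAbs, ← Ideal.absNorm_span_singleton, ← hI, map_pow, Nat.cast_pow]
  refine ⟨I.absNorm, ((abs_eq (sq_nonneg _)).1 habs).resolve_right fun hneg ↦ ?_⟩
  have hn : (I.absNorm : ℚ) ≠ 0 := by
    have hnorm : Algebra.norm ℤ x ≠ 0 := Algebra.norm_ne_zero_iff.2 hx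
    rw [hneg, neg_ne_zero] at hnorm
    exact_mod_cast ne_zero_pow two_ne_zero hnorm
  obtain ⟨a, b, hab⟩ := exists_norm_eq_sq_sub_mul_sq hdeg (d := (d : ℚ)) (α := (α : K))
    (by rw [Rat.isSquare_natCast_iff]; exact not_isSquare_of_odd_padicValNat hp hd)
    (by rw [← map_pow, hα, map_natCast, map_natCast]) (x : K)
  rw [← Algebra.coe_norm_int, hneg] at hab
  push_cast at hab
  exact rat_sq_add_sq_ne_mul_sq hp hp4 hd (a := a) (b := b) hn (by linear_combination -hab)

theorem isPrincipal_of_sq_eq_span_natCast_of_squarefree {m d : ℕ} (hm : Squarefree m)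
    {α : 𝓞 K} (hα : α ^ 2 = d) (hdiff : α ∈ differentIdeal ℤ (𝓞 K))
    (hfac : ∀ a b : ℕ, a * b = d → ∃ r s : ℤ, IsUnit (a * r ^ 2 - b * s ^ 2))
    {J : Ideal (𝓞 K)} (hJ : J ^ 2 = Ideal.span {(m : 𝓞 K)}) : J.IsPrincipal := by
  obtain ⟨b, rfl⟩ : m ∣ d := dvd_of_sq_eq_span_natCast_of_mem_differentIdeal hm hJ hdiff
    ⟨α, by rw [← sq, hα]⟩
  obtain ⟨r, s, hrs⟩ := hfac m b rfl
  exact isPrincipal_of_sq_eq_span_of_isUnit_mul_sq_sub_mul_sq (by rw [hα, Nat.cast_mul])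
    (by simpa using hrs.map (Int.castRingHom (𝓞 K))) hJ

theorem isPrincipal_of_sq_eq_span_intCast {m : ℤ} {d : ℕ} {α : 𝓞 K} (hα : α ^ 2 = d)
    (hdiff : α ∈ differentIdeal ℤ (𝓞 K))
    (hfac : ∀ a b : ℕ, a * b = d → ∃ r s : ℤ, IsUnit (a * r ^ 2 - b * s ^ 2))
    {J : Ideal (𝓞 K)} (hJ : J ^ 2 = Ideal.span {(m : 𝓞 K)}) : J.IsPrincipal := by
  obtain rfl | hm := eq_or_ne m 0
  · obtain rfl : J = ⊥ := eq_zero_of_pow_eq_zero (n := 2) (by simpa using hJ)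
    exact bot_isPrincipal
  obtain ⟨a, k, hak, ha⟩ := Nat.sq_mul_squarefree m.natAbs
  have hJak : J ^ 2 = Ideal.span {(k : 𝓞 K) ^ 2 * a} := by
    rw [hJ, Ideal.span_singleton_eq_span_singleton]
    simpa [← hak] using (Int.associated_natAbs m).map (Int.castRingHom (𝓞 K))
  have hk : k ≠ 0 := by
    rintro rfl
    exact hm (Int.natAbs_eq_zero.1 (by simpa using hak.symm))
  have hka : (k * a : 𝓞 K) ≠ 0 := by exact_mod_cast mul_ne_zero hk ha.ne_zero
  exact isPrincipal_of_sq_eq_mul_of_forall_sq_eq_span hJak hka (by ring)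
    fun _ ↦ isPrincipal_of_sq_eq_span_natCast_of_squarefree ha hα hdiff hfac

theorem odd_classNumber_of_forall_mul_eq (hdeg : Module.finrank ℚ K = 2) {p d : ℕ}
    (hp : p.Prime) (hp4 : p % 4 = 3) (hd : Odd (padicValNat p d)) (hd4 : d % 4 = 1)
    (hfac : ∀ a b : ℕ, a * b = d → ∃ r s : ℤ, IsUnit (a * r ^ 2 - b * s ^ 2))
    {α : 𝓞 K} (hα : α ^ 2 = d) : Odd (classNumber K) := by
  rw [classNumber, ← Nat.card_eq_fintype_card]
  refine odd_card_classGroup_of_forall_sq_eq_span fun I x hx hI ↦ ?_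
  obtain ⟨n, hn⟩ := exists_norm_eq_sq_of_sq_eq_span hdeg hp hp4 hd hα hx hI
  obtain ⟨m, y, hy, hym⟩ :=
    exists_sq_eq_algebraMap_mul_of_norm_eq_sq (by rw [RingOfIntegers.rank, hdeg]) hx hn
  exact isPrincipal_of_sq_eq_mul_of_forall_sq_eq_span hI hy hym fun J ↦
    isPrincipal_of_sq_eq_span_intCast hα
      (mem_differentIdeal_of_sq_eq hdeg hd4 (not_isSquare_of_odd_padicValNat hp hd) hα) hfac

end NumberField

/-- For distinct primes `p` and `q` with `p ≡ 3 (mod 4)` and `q ≡ 3 (mod 4)`, the class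
number of the real quadratic field `ℚ(√(pq))` (formalized as any degree-2 number field
containing a square root of `p*q`) is odd. -/
theorem odd_classNumber_of_sqrt_pq_three_mod_four
    (p q : ℕ) (hp : p.Prime) (hq : q.Prime) (hpq : p ≠ q)
    (hp4 : p % 4 = 3) (hq4 : q % 4 = 3)
    (K : Type) [Field K] [NumberField K]
    (hdeg : Module.finrank ℚ K = 2)
    (α : K) (hα : α ^ 2 = ((p : K) * q)) :
    Odd (NumberField.classNumber K) := by
  have hα_int : IsIntegral ℤ α := by
    refine IsIntegral.of_pow two_pos ?_
    rw [hα]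
    exact (isIntegral_natCast p).mul (isIntegral_natCast q)
  obtain ⟨β, rfl⟩ : ∃ β : 𝓞 K, (β : K) = α := ⟨⟨α, hα_int⟩, rfl⟩
  have hβ : β ^ 2 = (p * q : ℕ) := RingOfIntegers.ext (by push_cast; exact hα)
  have hd4 : p * q % 4 = 1 := by simp [Nat.mul_mod, hp4, hq4]
  exact odd_classNumber_of_forall_mul_eq hdeg hp hp4 (odd_padicValNat_mul_of_ne hp hq hpq) hd4
    (fun _ _ ↦ exists_isUnit_mul_sq_sub_mul_sq_of_mul_eq hp hq hpq hp4 hq4) hβ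
end

section
/- Let m > 1 be a squarefree integer. If the class number of the real quadratic field ℚ(√m) is odd, then either m is a prime, or m = pq for primes p and q where p = 2 or p ≡ 3 (mod 4), and q ≡ 3 (mod 4). -/
open NumberField

/-!
When the class number is odd, an element of `𝓞 K` generating the square of an ideal is a unit times
a square. As the units of a real quadratic field are `± ε ^ k`, among any two such elements `x`, `y`
one of `x`, `y`, `x * y` is plus or minus a square. On the other hand, the only positive squarefree
integers that are plus or minus a square in `ℚ(√m)` are `1` and `m`, and no element of negative norm
is. Elements generating squares of ideals are supplied by ramification: every divisor of `m`, and
`2` if `m ≡ 3 [MOD 4]`; and, if `m = a ^ 2 + b ^ 2`, also `a + √m`, whose norm is `-b ^ 2`.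
Too many prime factors, or prime factors of the wrong residue, would give an impossible pair.
-/

section SquaresUpToUnits

/-- `x` is plus or minus a square. -/
def IsSquareUpToSign {R : Type*} [Mul R] [Neg R] (x : R) : Prop :=
  IsSquare x ∨ IsSquare (-x)

/-- `x` is a unit times a square. In a Dedekind domain of odd class number these are the generators
of squares of ideals. -/
def IsSquareUpToUnit {R : Type*} [Monoid R] (x : R) : Prop :=
  ∃ y, Associated (y ^ 2) x

theorem IsSquareUpToSign.map {R S : Type*} [Ring R] [Ring S] {x : R} (hx : IsSquareUpToSign x)
    (f : R →+* S) : IsSquareUpToSign (f x) :=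
  Or.imp (fun h => h.map f) (fun h => map_neg f x ▸ h.map f) hx

theorem IsSquareUpToSign.sq_mul_units {R : Type*} [CommRing R] {u : Rˣ} (hu : IsSquareUpToSign u)
    (y : R) : IsSquareUpToSign (y ^ 2 * (u : R)) := by
  refine Or.imp (fun h => ?_) (fun h => ?_) hu
  · exact (IsSquare.sq y).mul (h.map (Units.coeHom R))
  · simpa using (IsSquare.sq y).mul (h.map (Units.coeHom R))

theorem isSquareUpToSign_of_eq_zpow_or_eq_neg_zpow {G : Type*} [Group G] [HasDistribNeg G]
    {ε u : G} {k : ℤ} (hu : u = ε ^ k ∨ u = -ε ^ k) (hk : Even k) : IsSquareUpToSign u := by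
  rcases hu with rfl | rfl
  · exact Or.inl (hk.isSquare_zpow ε)
  · exact Or.inr ((neg_neg (ε ^ k)).symm ▸ hk.isSquare_zpow ε)

theorem isSquareUpToSign_or_or_mul_of_generator {G : Type*} [CommGroup G] [HasDistribNeg G] {ε : G}
    (hε : ∀ u : G, ∃ k : ℤ, u = ε ^ k ∨ u = -ε ^ k) (u v : G) :
    IsSquareUpToSign u ∨ IsSquareUpToSign v ∨ IsSquareUpToSign (u * v) := by
  obtain ⟨k, hu⟩ := hε u
  obtain ⟨l, hv⟩ := hε v
  rcases Int.even_or_odd k with hk | hk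
  · exact Or.inl (isSquareUpToSign_of_eq_zpow_or_eq_neg_zpow hu hk)
  rcases Int.even_or_odd l with hl | hl
  · exact Or.inr (Or.inl (isSquareUpToSign_of_eq_zpow_or_eq_neg_zpow hv hl))
  refine Or.inr (Or.inr (isSquareUpToSign_of_eq_zpow_or_eq_neg_zpow (ε := ε) ?_ (hk.add_odd hl)))
  rcases hu with rfl | rfl <;> rcases hv with rfl | rfl <;> simp [zpow_add]

theorem IsSquareUpToUnit.isSquareUpToSign_or_or_mul {R : Type*} [CommRing R] {ε : Rˣ}
    (hε : ∀ u : Rˣ, ∃ k : ℤ, u = ε ^ k ∨ u = -ε ^ k) {x y : R} (hx : IsSquareUpToUnit x)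
    (hy : IsSquareUpToUnit y) :
    IsSquareUpToSign x ∨ IsSquareUpToSign y ∨ IsSquareUpToSign (x * y) := by
  obtain ⟨s, u, rfl⟩ := hx
  obtain ⟨t, v, rfl⟩ := hy
  have hmul : s ^ 2 * (u : R) * (t ^ 2 * v) = (s * t) ^ 2 * (u * v : Rˣ) := by
    push_cast; ring
  rw [hmul]
  exact (isSquareUpToSign_or_or_mul_of_generator hε u v).imp (·.sq_mul_units s)
    (Or.imp (·.sq_mul_units t) (·.sq_mul_units (s * t)))

end SquaresUpToUnits

section OddClassNumber

theorem span_pair_sq_eq_span_singleton_s6 {R : Type*} [CommRing R] {x y z : R} (h : y ^ 2 = x * z)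
    (hcop : Ideal.span {x, y, z} = ⊤) : Ideal.span {x, y} ^ 2 = Ideal.span {x} := by
  calc Ideal.span {x, y} ^ 2 = Ideal.span {x * x, x * y, y * x, y * y} := by
        rw [sq, Ideal.span_pair_mul_span_pair]
    _ = Ideal.span {x * x, x * y, x * z} := by
        rw [mul_comm y x, ← sq y, h, Set.insert_idem]
    _ = Ideal.span {x} * Ideal.span {x, y, z} := by
        rw [Ideal.span_mul_span', Set.singleton_mul]
        simp only [Set.image_insert_eq, Set.image_singleton]
    _ = Ideal.span {x} := by rw [hcop, Ideal.mul_top]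

variable {R : Type*} [CommRing R] [IsDedekindDomain R] [Fintype (ClassGroup R)]

theorem isSquareUpToUnit_of_sq_eq_span_singleton (hodd : Odd (Fintype.card (ClassGroup R)))
    {I : Ideal R} {x : R} (hI : I ^ 2 = Ideal.span {x}) : IsSquareUpToUnit x := by
  have hprincipal : I.IsPrincipal :=
    Ideal.IsPrincipal.of_isPrincipal_pow_of_coprime (Nat.coprime_two_left.2 hodd) ⟨x, hI⟩
  obtain ⟨y, rfl⟩ := hprincipal
  refine ⟨y, ?_⟩
  rwa [Ideal.submodule_span_eq, Ideal.span_singleton_pow,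
    Ideal.span_singleton_eq_span_singleton] at hI

theorem isSquareUpToUnit_of_sq_eq_mul (hodd : Odd (Fintype.card (ClassGroup R))) {x y z : R}
    (h : y ^ 2 = x * z) (r s t : R) (hcop : r * x + s * y + t * z = 1) : IsSquareUpToUnit x := by
  refine isSquareUpToUnit_of_sq_eq_span_singleton hodd (span_pair_sq_eq_span_singleton_s6 h ?_)
  exact (Ideal.eq_top_iff_one _).2 (Submodule.mem_span_triple.2 ⟨r, s, t, hcop⟩)

theorem isSquareUpToUnit_of_sq_eq_mul_of_isCoprime (hodd : Odd (Fintype.card (ClassGroup R)))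
    {β d n : R} (hβ : β ^ 2 = d * n) (hdn : IsCoprime d n) : IsSquareUpToUnit d := by
  obtain ⟨r, t, hrt⟩ := hdn
  exact isSquareUpToUnit_of_sq_eq_mul hodd hβ r 0 t (by linear_combination hrt)

theorem isSquareUpToUnit_two (hodd : Odd (Fintype.card (ClassGroup R))) {β k : R}
    (hβ : β ^ 2 = 4 * k + 3) : IsSquareUpToUnit (2 : R) :=
  isSquareUpToUnit_of_sq_eq_mul hodd (y := 1 + β) (z := 2 * k + 2 + β)
    (by linear_combination hβ) (-k) (-1) 1 (by ring)

theorem isSquareUpToUnit_add_of_sq_eq_sq_add_sq (hodd : Odd (Fintype.card (ClassGroup R)))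
    {β a b : R} (hβ : β ^ 2 = a ^ 2 + b ^ 2) (hab : IsCoprime (2 * a) b) :
    IsSquareUpToUnit (a + β) := by
  obtain ⟨r, s, hrs⟩ := hab
  exact isSquareUpToUnit_of_sq_eq_mul hodd (y := b) (z := β - a) (by linear_combination -hβ)
    r s (-r) (by linear_combination hrs)

end OddClassNumber

section Units

variable {K : Type*} [Field K] [NumberField K]

theorem eq_one_or_eq_neg_one_of_mem_torsion (φ : K →+* ℝ) {ζ : (𝓞 K)ˣ}
    (hζ : ζ ∈ Units.torsion K) : ζ = 1 ∨ ζ = -1 := by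
  obtain ⟨n, hn, hζn⟩ := isOfFinOrder_iff_pow_eq_one.1 ((CommGroup.mem_torsion ζ).1 hζ)
  have hinj : Function.Injective fun u : (𝓞 K)ˣ => φ (u : K) :=
    φ.injective.comp (Units.coe_injective K)
  have hpow : φ (ζ : K) ^ n = 1 := by
    rw [← map_pow, ← Units.coe_pow, hζn, Units.coe_one, map_one]
  rcases (pow_eq_one_iff_of_ne_zero hn.ne').1 hpow with h | ⟨h, -⟩
  · exact Or.inl (hinj (by simpa using h))
  · exact Or.inr (hinj (by simpa using h))

theorem unitRank_le_one_of_finrank_eq_two (hdeg : Module.finrank ℚ K = 2) :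
    Units.rank K ≤ 1 := by
  have hcard := InfinitePlace.card_add_two_mul_card_eq_rank K
  rw [Units.rank, InfinitePlace.card_eq_nrRealPlaces_add_nrComplexPlaces]
  omega

theorem exists_forall_unit_eq_zpow_or_eq_neg_zpow (hrank : Units.rank K ≤ 1) (φ : K →+* ℝ) :
    ∃ ε : (𝓞 K)ˣ, ∀ u : (𝓞 K)ˣ, ∃ k : ℤ, u = ε ^ k ∨ u = -ε ^ k := by
  have : Subsingleton (Fin (Units.rank K)) := Fin.subsingleton_iff_le_one.2 hrank
  refine ⟨∏ i, Units.fundSystem K i, fun u => ?_⟩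
  obtain ⟨⟨ζ, f⟩, hu, -⟩ := Units.exist_unique_eq_mul_prod K u
  obtain ⟨k, hk⟩ : ∃ k : ℤ, ∀ i, f i = k := by
    rcases isEmpty_or_nonempty (Fin (Units.rank K)) with _ | ⟨⟨i⟩⟩
    · exact ⟨0, isEmptyElim⟩
    · exact ⟨f i, fun j => congrArg f (Subsingleton.elim j i)⟩
  refine ⟨k, ?_⟩
  simp only [hk, Finset.prod_zpow] at hu
  exact (eq_one_or_eq_neg_one_of_mem_torsion φ ζ.2).imp (by simp [hu, ·]) (by simp [hu, ·])

end Units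

section QuadraticAlgebra

open QuadraticAlgebra

theorem IsSquareUpToSign.quadraticAlgebra_norm_nonneg {F : Type*} [CommRing F] [LinearOrder F]
    [IsStrictOrderedRing F] {a b : F} {x : QuadraticAlgebra F a b} (hx : IsSquareUpToSign x) :
    0 ≤ x.norm := by
  rcases hx with h | h
  · exact (h.map QuadraticAlgebra.norm).nonneg
  · exact norm_neg x ▸ (h.map QuadraticAlgebra.norm).nonneg

theorem isSquare_or_isSquare_mul_of_isSquare_algebraMap {F : Type*} [Field F] [NeZero (2 : F)]
    {m a : F} (h : IsSquare (algebraMap F (QuadraticAlgebra F m 0) a)) :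
    IsSquare a ∨ IsSquare (a * m) := by
  obtain ⟨⟨c, e⟩, hce⟩ := h
  have hre : a = c * c + m * e * e := by simpa using congrArg QuadraticAlgebra.re hce
  have him : 0 = c * e + e * c := by simpa using congrArg QuadraticAlgebra.im hce
  have hprod : 2 * (c * e) = 0 := by linear_combination -him
  rcases mul_eq_zero.1 ((mul_eq_zero.1 hprod).resolve_left two_ne_zero) with rfl | rfl
  · exact Or.inr ⟨m * e, by rw [hre]; ring⟩
  · exact Or.inl ⟨c, by rw [hre]; ring⟩

theorem exists_quadraticAlgebra_algEquiv {F L : Type*} [Field F] [Field L] [Algebra F L] {m : F}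
    (hm : ¬IsSquare m) (hdeg : Module.finrank F L = 2) {α : L} (hα : α ^ 2 = algebraMap F L m) :
    ∃ e : QuadraticAlgebra F m 0 ≃ₐ[F] L, e ω = α := by
  have : Fact (∀ r : F, r ^ 2 ≠ m + 0 * r) :=
    ⟨fun r hr => hm ⟨r, by linear_combination -hr⟩⟩
  have : FiniteDimensional F L := .of_finrank_eq_succ hdeg
  let f : QuadraticAlgebra F m 0 →ₐ[F] L :=
    QuadraticAlgebra.lift ⟨α, by rw [← sq, hα, Algebra.algebraMap_eq_smul_one, zero_smul, add_zero]⟩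
  have hinj : Function.Injective f := f.toRingHom.injective
  have hsurj : Function.Surjective f :=
    (LinearMap.injective_iff_surjective_of_finrank_eq_finrank (f := f.toLinearMap)
      (by rw [hdeg, finrank_eq_two])).1 hinj
  exact ⟨.ofBijective f ⟨hinj, hsurj⟩, show f ω = α by simp [f]⟩

theorem exists_ringHom_real_of_algEquiv {K : Type*} [Field K] [Algebra ℚ K] {m : ℚ} (hm : 0 ≤ m)
    (e : QuadraticAlgebra ℚ m 0 ≃ₐ[ℚ] K) : Nonempty (K →+* ℝ) := by
  have hsqrt : √(m : ℝ) * √(m : ℝ) = m • 1 + (0 : ℚ) • √(m : ℝ) := by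
    rw [Real.mul_self_sqrt (by exact_mod_cast hm), zero_smul, add_zero, Rat.smul_one_eq_cast]
  exact ⟨((QuadraticAlgebra.lift ⟨√(m : ℝ), hsqrt⟩).comp e.symm.toAlgHom).toRingHom⟩

end QuadraticAlgebra

section Integers

theorem dvd_of_squarefree_of_isSquare_mul {M : Type*} [CommMonoidWithZero M]
    [IsCancelMulZero M] [DecompositionMonoid M] [Nontrivial M] {d m : M} (hd : Squarefree d)
    (h : IsSquare (d * m)) : d ∣ m := by
  obtain ⟨k, hk⟩ := h
  obtain ⟨t, rfl⟩ : d ∣ k := by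
    rw [← hd.dvd_pow_iff_dvd two_ne_zero, sq, ← hk]
    exact dvd_mul_right d m
  refine ⟨t * t, mul_left_cancel₀ hd.ne_zero ?_⟩
  rw [hk, mul_mul_mul_comm, mul_assoc]

theorem not_isSquare_of_squarefree_of_one_lt {m : ℤ} (hm : 1 < m) (hsf : Squarefree m) :
    ¬IsSquare m := by
  rintro ⟨k, rfl⟩
  rcases Int.isUnit_iff.1 (hsf k dvd_rfl) with rfl | rfl <;> simp at hm

theorem eq_of_isSquareUpToSign_intCast {m d : ℤ} (hm : 0 < m) (hsf : Squarefree m) (hd : 1 < d)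
    (hdsf : Squarefree d) (h : IsSquareUpToSign (d : QuadraticAlgebra ℚ (m : ℚ) 0)) : d = m := by
  have hsq {n : ℤ} (hn : IsSquare (n : QuadraticAlgebra ℚ (m : ℚ) 0)) :
      IsSquare n ∨ IsSquare (n * m) := by
    have := isSquare_or_isSquare_mul_of_isSquare_algebraMap (F := ℚ) (m := m) (a := n) (by simpa)
    exact_mod_cast this
  rcases h with h | h
  · have hdm := (hsq h).resolve_left (not_isSquare_of_squarefree_of_one_lt hd hdsf)
    exact Int.dvd_antisymm (by lia) hm.le
      (dvd_of_squarefree_of_isSquare_mul hdsf hdm)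
      (dvd_of_squarefree_of_isSquare_mul hsf (mul_comm d m ▸ hdm))
  · rcases hsq (n := -d) (by simpa using h) with hneg | hneg
    · linarith [hneg.nonneg]
    · nlinarith [hneg.nonneg]

theorem exists_eq_sq_add_sq_isCoprime {n : ℕ} (hn : Squarefree n)
    (h : ∀ q : ℕ, q.Prime → q ∣ n → q % 4 ≠ 3) :
    ∃ a b : ℤ, (n : ℤ) = a ^ 2 + b ^ 2 ∧ IsCoprime (2 * a) b := by
  have hsq : IsSquare (-1 : ZMod n) :=
    (ZMod.isSquare_neg_one_iff_forall_mem_primeFactors_mod_four_ne_three hn).2 fun q hq =>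
      h q (Nat.prime_of_mem_primeFactors hq) (Nat.dvd_of_mem_primeFactors hq)
  obtain ⟨x, y, hxy⟩ := Nat.eq_sq_add_sq_of_isSquare_mod_neg_one hsq
  have hcop : x.Coprime y := by
    refine Nat.isUnit_iff.1 (hn _ ?_)
    rw [hxy, ← sq]
    exact dvd_add (pow_dvd_pow_of_dvd (Nat.gcd_dvd_left x y) 2)
      (pow_dvd_pow_of_dvd (Nat.gcd_dvd_right x y) 2)
  wlog hy : Odd y generalizing x y
  · have hx : Odd x := Nat.not_even_iff_odd.1 fun hx => Nat.not_coprime_of_dvd_of_dvd one_lt_two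
      hx.two_dvd (Nat.not_odd_iff_even.1 hy).two_dvd hcop
    exact this y x (hxy.trans (add_comm _ _)) hcop.symm hx
  refine ⟨x, y, by exact_mod_cast hxy, ?_⟩
  exact_mod_cast Nat.isCoprime_iff_coprime.2 ((Nat.coprime_two_left.2 hy).mul_left hcop)

theorem exists_prime_ne_dvd {n q : ℕ} (hn : Squarefree n) (hq : q.Prime) (hqn : q ∣ n)
    (hne : n ≠ q) : ∃ p : ℕ, p.Prime ∧ p ≠ q ∧ p ∣ n := by
  obtain ⟨k, rfl⟩ := hqn
  obtain ⟨p, hp, hpk⟩ := Nat.exists_prime_and_dvd (n := k) (by rintro rfl; simp at hne)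
  refine ⟨p, hp, ?_, hpk.mul_left q⟩
  rintro rfl
  exact hp.not_isUnit (hn p (mul_dvd_mul_left p hpk))

end Integers

section RealQuadratic

open QuadraticAlgebra

variable {K : Type*} [Field K] [NumberField K] {m : ℤ} {β : 𝓞 K}

theorem exists_quadraticAlgebra_algEquiv_of_ringOfIntegers (hm : ¬IsSquare m)
    (hdeg : Module.finrank ℚ K = 2) (hβ : β ^ 2 = m) :
    ∃ e : QuadraticAlgebra ℚ (m : ℚ) 0 ≃ₐ[ℚ] K, e ω = β := by
  refine exists_quadraticAlgebra_algEquiv (by rwa [Rat.isSquare_intCast_iff]) hdeg ?_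
  rw [← map_pow, hβ, map_intCast, map_intCast]

theorem exists_ringHom_quadraticAlgebra (hm : ¬IsSquare m) (hdeg : Module.finrank ℚ K = 2)
    (hβ : β ^ 2 = m) : ∃ ι : 𝓞 K →+* QuadraticAlgebra ℚ (m : ℚ) 0, ι β = ω := by
  obtain ⟨e, he⟩ := exists_quadraticAlgebra_algEquiv_of_ringOfIntegers hm hdeg hβ
  exact ⟨e.symm.toRingEquiv.toRingHom.comp (algebraMap (𝓞 K) K), e.symm_apply_eq.2 he.symm⟩

theorem exists_fundamental_unit_of_real_quadratic (hm0 : 0 ≤ m) (hm : ¬IsSquare m)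
    (hdeg : Module.finrank ℚ K = 2) (hβ : β ^ 2 = m) :
    ∃ ε : (𝓞 K)ˣ, ∀ u : (𝓞 K)ˣ, ∃ k : ℤ, u = ε ^ k ∨ u = -ε ^ k := by
  obtain ⟨e, -⟩ := exists_quadraticAlgebra_algEquiv_of_ringOfIntegers hm hdeg hβ
  obtain ⟨φ⟩ := exists_ringHom_real_of_algEquiv (by exact_mod_cast hm0) e
  exact exists_forall_unit_eq_zpow_or_eq_neg_zpow (unitRank_le_one_of_finrank_eq_two hdeg) φ

theorem isSquareUpToUnit_intCast_of_dvd (hsf : Squarefree m) (hβ : β ^ 2 = m)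
    (hodd : Odd (classNumber K)) {d : ℤ} (hd : d ∣ m) : IsSquareUpToUnit (d : 𝓞 K) := by
  obtain ⟨n, rfl⟩ := hd
  have hcop : IsCoprime d n := (squarefree_mul_iff.1 hsf).1.isCoprime
  exact isSquareUpToUnit_of_sq_eq_mul_of_isCoprime hodd (by rw [hβ, Int.cast_mul]) hcop.intCast

theorem eq_or_eq_or_mul_eq_of_isSquareUpToUnit (hm : 1 < m) (hsf : Squarefree m)
    (hdeg : Module.finrank ℚ K = 2) (hβ : β ^ 2 = m) {c d : ℤ} (hc : 1 < c) (hd : 1 < d)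
    (hcd : Squarefree (c * d)) (hcK : IsSquareUpToUnit (c : 𝓞 K))
    (hdK : IsSquareUpToUnit (d : 𝓞 K)) : c = m ∨ d = m ∨ c * d = m := by
  have hns := not_isSquare_of_squarefree_of_one_lt hm hsf
  obtain ⟨ι, -⟩ := exists_ringHom_quadraticAlgebra hns hdeg hβ
  obtain ⟨ε, hε⟩ := exists_fundamental_unit_of_real_quadratic (by lia) hns hdeg hβ
  have hsign {x : ℤ} (hx : 1 < x) (hxsf : Squarefree x) (h : IsSquareUpToSign (x : 𝓞 K)) :
      x = m :=
    eq_of_isSquareUpToSign_intCast (by lia) hsf hx hxsf (map_intCast ι x ▸ h.map ι)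
  exact (hcK.isSquareUpToSign_or_or_mul hε hdK).imp (hsign hc hcd.of_mul_left)
    (Or.imp (hsign hd hcd.of_mul_right)
      fun h => hsign (by nlinarith) hcd (by rwa [Int.cast_mul]))

theorem eq_of_dvd_of_eq_sq_add_sq (hsf : Squarefree m)
    (hdeg : Module.finrank ℚ K = 2) (hβ : β ^ 2 = m) (hodd : Odd (classNumber K)) {a b d : ℤ}
    (hab : m = a ^ 2 + b ^ 2) (hcop : IsCoprime (2 * a) b) (hd : 1 < d) (hdm : d ∣ m) : d = m := by
  have hm0 : 0 < m := lt_of_le_of_ne (hab ▸ by positivity) hsf.ne_zero.symm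
  have hm : 1 < m := hd.trans_le (Int.le_of_dvd hm0 hdm)
  have hns := not_isSquare_of_squarefree_of_one_lt hm hsf
  obtain ⟨ι, hι⟩ := exists_ringHom_quadraticAlgebra hns hdeg hβ
  obtain ⟨ε, hε⟩ := exists_fundamental_unit_of_real_quadratic (by lia) hns hdeg hβ
  have hadd : IsSquareUpToUnit ((a : 𝓞 K) + β) :=
    isSquareUpToUnit_add_of_sq_eq_sq_add_sq hodd (b := (b : 𝓞 K))
      (by rw [hβ, hab]; push_cast; rfl) (by exact_mod_cast hcop.intCast (R := 𝓞 K))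
  have hnorm : (ι (a + β)).norm = -(b : ℚ) ^ 2 := by
    simp only [map_add, map_intCast, hι, norm_def, re_add, re_intCast, omega_re, add_zero,
      zero_mul, im_add, im_intCast, omega_im, zero_add, mul_one, hab, Int.cast_add, Int.cast_pow]
    ring
  have hnormd : (ι ((a + β) * d)).norm = -((b : ℚ) * d) ^ 2 := by
    rw [map_mul, map_mul, hnorm, map_intCast, norm_intCast]; ring
  have hb : (b : ℚ) ≠ 0 := by
    intro hb
    obtain rfl : b = 0 := by exact_mod_cast hb
    have := Int.isUnit_iff.1 (isCoprime_zero_right.1 hcop)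
    lia
  have hd0 : (d : ℚ) ≠ 0 := by exact_mod_cast (by lia : d ≠ 0)
  rcases hadd.isSquareUpToSign_or_or_mul hε (isSquareUpToUnit_intCast_of_dvd hsf hβ hodd hdm)
    with h | h | h
  · have := hnorm ▸ (h.map ι).quadraticAlgebra_norm_nonneg
    linarith [sq_pos_of_ne_zero hb]
  · exact eq_of_isSquareUpToSign_intCast (by lia) hsf hd (hsf.squarefree_of_dvd hdm)
      (map_intCast ι d ▸ h.map ι)
  · have := hnormd ▸ (h.map ι).quadraticAlgebra_norm_nonneg
    linarith [sq_pos_of_ne_zero (mul_ne_zero hb hd0)]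

end RealQuadratic

section PrimeDivisors

variable {K : Type*} [Field K] [NumberField K] {n p q : ℕ} {β : 𝓞 K}

theorem mul_eq_of_prime_dvd (hn : Squarefree n) (hdeg : Module.finrank ℚ K = 2)
    (hβ : β ^ 2 = ((n : ℤ) : 𝓞 K)) (hodd : Odd (classNumber K)) (hp : p.Prime) (hq : q.Prime)
    (hpq : p ≠ q) (hpn : p ∣ n) (hqn : q ∣ n) : p * q = n := by
  have hcop : p.Coprime q := (Nat.coprime_primes hp hq).2 hpq
  have hsf : Squarefree (p * q) := Nat.squarefree_mul_iff.2 ⟨hcop, hp.squarefree, hq.squarefree⟩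
  have h1 : 1 < n := hp.one_lt.trans_le (Nat.le_of_dvd hn.ne_zero.bot_lt hpn)
  have hn' : Squarefree (n : ℤ) := Int.squarefree_natCast.2 hn
  have := eq_or_eq_or_mul_eq_of_isSquareUpToUnit (by exact_mod_cast h1) hn' hdeg hβ
    (c := p) (d := q) (by exact_mod_cast hp.one_lt) (by exact_mod_cast hq.one_lt)
    (by exact_mod_cast Int.squarefree_natCast.2 hsf)
    (isSquareUpToUnit_intCast_of_dvd hn' hβ hodd (by exact_mod_cast hpn))
    (isSquareUpToUnit_intCast_of_dvd hn' hβ hodd (by exact_mod_cast hqn))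
  norm_cast at this
  rcases this with rfl | rfl | h
  · exact absurd ((Nat.prime_dvd_prime_iff_eq hq hp).1 hqn) hpq.symm
  · exact absurd ((Nat.prime_dvd_prime_iff_eq hp hq).1 hpn) hpq
  · exact h

theorem eq_of_prime_dvd_of_mod_four_eq_three (hn : Squarefree n) (hdeg : Module.finrank ℚ K = 2)
    (hβ : β ^ 2 = ((n : ℤ) : 𝓞 K)) (hodd : Odd (classNumber K)) (hn4 : n % 4 = 3)
    (hp : p.Prime) (hpn : p ∣ n) : p = n := by
  have hp2 : Nat.Coprime 2 p :=
    (Nat.coprime_two_left.2 (Nat.odd_iff.2 (by lia))).coprime_dvd_right hpn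
  have hsf : Squarefree (2 * p) :=
    Nat.squarefree_mul_iff.2 ⟨hp2, Nat.prime_two.squarefree, hp.squarefree⟩
  have hn' : Squarefree (n : ℤ) := Int.squarefree_natCast.2 hn
  have htwo : IsSquareUpToUnit (2 : 𝓞 K) := by
    obtain ⟨k, rfl⟩ : ∃ k, n = 4 * k + 3 := ⟨n / 4, by lia⟩
    exact isSquareUpToUnit_two hodd (β := β) (k := (k : 𝓞 K)) (by rw [hβ]; push_cast; rfl)
  have := eq_or_eq_or_mul_eq_of_isSquareUpToUnit (by lia) hn' hdeg hβ
    (c := 2) (d := p) one_lt_two (by exact_mod_cast hp.one_lt)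
    (by exact_mod_cast Int.squarefree_natCast.2 hsf) (by exact_mod_cast htwo)
    (isSquareUpToUnit_intCast_of_dvd hn' hβ hodd (by exact_mod_cast hpn))
  lia

theorem exists_prime_dvd_mod_four_eq_three (hn : Squarefree n) (h1 : 1 < n) (hnp : ¬n.Prime)
    (hdeg : Module.finrank ℚ K = 2) (hβ : β ^ 2 = ((n : ℤ) : 𝓞 K)) (hodd : Odd (classNumber K)) :
    ∃ q : ℕ, q.Prime ∧ q ∣ n ∧ q % 4 = 3 := by
  by_contra! h
  obtain ⟨a, b, hab, hcop⟩ := exists_eq_sq_add_sq_isCoprime hn h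
  have hp : n.minFac.Prime := Nat.minFac_prime h1.ne'
  have heq := eq_of_dvd_of_eq_sq_add_sq (Int.squarefree_natCast.2 hn) hdeg hβ
    hodd hab hcop (d := n.minFac) (by exact_mod_cast hp.one_lt)
    (by exact_mod_cast n.minFac_dvd)
  exact hnp (Nat.cast_injective heq ▸ hp)

end PrimeDivisors

/-- Let `m > 1` be a squarefree integer. If the class number of the real quadratic field
`ℚ(√m)` (formalized as any degree-2 number field containing a square root of `m`) is odd,
then either `m` is a prime, or `m = pq` for primes `p` and `q` where `p = 2` or
`p ≡ 3 (mod 4)`, and `q ≡ 3 (mod 4)`. -/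
theorem structure_of_m_of_odd_classNumber_real_quadratic
    (m : ℤ) (hm : 1 < m) (hsf : Squarefree m)
    (K : Type) [Field K] [NumberField K]
    (hdeg : Module.finrank ℚ K = 2)
    (α : K) (hα : α ^ 2 = (m : K))
    (hodd : Odd (NumberField.classNumber K)) :
    (∃ p : ℕ, p.Prime ∧ m = (p : ℤ)) ∨
      (∃ p q : ℕ, p.Prime ∧ q.Prime ∧ (p = 2 ∨ p % 4 = 3) ∧ q % 4 = 3 ∧
        m = (p : ℤ) * q) := by
  obtain ⟨n, rfl⟩ := Int.eq_ofNat_of_zero_le (zero_le_one.trans hm.le)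
  have hn : Squarefree n := Int.squarefree_natCast.1 hsf
  have hint : IsIntegral ℤ α := .of_pow two_pos (hα ▸ isIntegral_algebraMap (R := ℤ))
  obtain ⟨β, rfl⟩ : ∃ β : 𝓞 K, (β : K) = α := ⟨⟨α, hint⟩, rfl⟩
  have hβ : β ^ 2 = ((n : ℤ) : 𝓞 K) := RingOfIntegers.ext (by simpa using hα)
  by_cases hprime : n.Prime
  · exact Or.inl ⟨n, hprime, rfl⟩
  obtain ⟨q, hq, hqn, hq4⟩ :=
    exists_prime_dvd_mod_four_eq_three hn (by exact_mod_cast hm) hprime hdeg hβ hodd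
  have hqne : n ≠ q := fun h => hprime (h ▸ hq)
  obtain ⟨p, hp, hpq, hpn⟩ := exists_prime_ne_dvd hn hq hqn hqne
  have hmul : p * q = n := mul_eq_of_prime_dvd hn hdeg hβ hodd hp hq hpq hpn hqn
  have hn4 : n % 4 ≠ 3 := fun h =>
    hqne (eq_of_prime_dvd_of_mod_four_eq_three hn hdeg hβ hodd h hq hqn).symm
  have hp4 : p % 4 ≠ 1 := fun h => hn4 (by rw [← hmul, Nat.mul_mod, h, hq4])
  have hp_cases : p = 2 ∨ p % 4 = 3 := hp.eq_two_or_odd.imp_right (by lia)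
  exact Or.inr ⟨p, q, hp, hq, hp_cases, hq4, by exact_mod_cast hmul.symm⟩
end

section
/- (Dirichlet's Lemma) Let χ be a primitive quadratic Dirichlet character modulo n > 1 (i.e., χ is nontrivial, χ² is the trivial character, and χ is primitive). Then there exists a fundamental discriminant Δ with |Δ| = n such that χ(p) = (Δ/p) (the Jacobi symbol of Δ over p) for every odd prime p not dividing 2Δ. -/
/-- An integer `Δ ≠ 1` is a fundamental discriminant if either `Δ ≡ 1 (mod 4)` and `Δ` is
squarefree, or `Δ = 4m` where `m` is a squarefree integer with `m ≡ 2` or `3 (mod 4)`. -/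
def IsFundamentalDiscriminant (Δ : ℤ) : Prop :=
  Δ ≠ 1 ∧ ((Δ % 4 = 1 ∧ Squarefree Δ) ∨
    ∃ m : ℤ, Δ = 4 * m ∧ Squarefree m ∧ (m % 4 = 2 ∨ m % 4 = 3))

/-!
By the Chinese remainder theorem a character modulo `a * b`, with `a` and `b` coprime, is a product
of characters modulo `a` and modulo `b`, and both factors inherit `χ ^ 2 = 1` and primitivity. As
fundamental discriminants are closed under coprime products, this leaves prime power moduli.

Modulo `p ^ k` with `p` odd, a unit congruent to `1` modulo `p` has odd order, so a quadratic
character already factors through `p`; there `(ℤ/p)ˣ` is cyclic, the character is the Legendre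
symbol, and quadratic reciprocity rewrites it as `k ↦ (p*/k)`. Modulo `2 ^ k` with `4 ≤ k`, a unit
congruent to `1` modulo `2 ^ (k - 1)` is a square, so the level is `4` or `8` and the character is
one of `χ₄`, `χ₈`, `χ₈'`, of discriminant `-4`, `8`, `-8`.
-/

open DirichletCharacter ZMod
open scoped NumberTheorySymbols

section MulChar

variable {M R : Type*} [CommRing R] [NoZeroDivisors R]

lemma mulChar_apply_eq_neg_one [CommMonoid M] {χ : MulChar M R} (hχ : χ ^ 2 = 1) {u : Mˣ}
    (hu : χ u ≠ 1) : χ u = -1 := by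
  have hsq : χ u ^ 2 = 1 := by rw [← MulChar.pow_apply_coe, hχ, MulChar.one_apply_coe]
  exact (sq_eq_one_iff.1 hsq).resolve_left hu

lemma mulChar_apply_generator_eq_neg_one [CommRing M] {χ : MulChar M R} (hχ : χ ^ 2 = 1)
    (hχ₁ : χ ≠ 1) {g : Mˣ} (hg : ∀ x, x ∈ Subgroup.zpowers g) : χ g = -1 :=
  mulChar_apply_eq_neg_one hχ fun h =>
    hχ₁ ((MulChar.eq_iff hg χ 1).2 (by rw [h, MulChar.one_apply_coe]))

lemma mulChar_eq_ringHomComp_of_isCyclic [CommRing M] [IsCyclic Mˣ] {χ : MulChar M R}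
    {ψ : MulChar M ℤ} (hχ : χ ^ 2 = 1) (hχ₁ : χ ≠ 1) (hψ : ψ ^ 2 = 1) (hψ₁ : ψ ≠ 1) :
    χ = ψ.ringHomComp (Int.castRingHom R) := by
  obtain ⟨g, hg⟩ := IsCyclic.exists_generator (α := Mˣ)
  rw [MulChar.eq_iff hg, MulChar.ringHomComp_apply, mulChar_apply_generator_eq_neg_one hχ hχ₁ hg,
    mulChar_apply_generator_eq_neg_one hψ hψ₁ hg, map_neg, map_one]

end MulChar

section Coprime

variable {R : Type*} [CommMonoidWithZero R] {a b : ℕ}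

lemma exists_eq_changeLevel_mul_changeLevel (hab : a.Coprime b)
    (χ : DirichletCharacter R (a * b)) :
    ∃ (φ : DirichletCharacter R a) (ψ : DirichletCharacter R b),
      χ = changeLevel (dvd_mul_right a b) φ * changeLevel (dvd_mul_left b a) ψ := by
  let e : (ZMod (a * b))ˣ ≃* (ZMod a)ˣ × (ZMod b)ˣ :=
    (Units.mapEquiv (ZMod.chineseRemainder hab).toMulEquiv).trans MulEquiv.prodUnits
  let f : (ZMod a)ˣ × (ZMod b)ˣ →* Rˣ := χ.toUnitHom.comp e.symm.toMonoidHom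
  refine ⟨MulChar.ofUnitHom (f.comp (.inl _ _)), MulChar.ofUnitHom (f.comp (.inr _ _)),
    MulChar.ext fun u => ?_⟩
  have he : e u = (unitsMap (dvd_mul_right a b) u, unitsMap (dvd_mul_left b a) u) := by
    ext
    · exact Prod.fst_zmod_cast _
    · exact Prod.snd_zmod_cast _
  have hf : f (unitsMap (dvd_mul_right a b) u, 1) * f (1, unitsMap (dvd_mul_left b a) u) =
      χ.toUnitHom u := by
    rw [← map_mul, Prod.mk_mul_mk, mul_one, one_mul, ← he]
    exact congrArg χ.toUnitHom (e.symm_apply_apply u)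
  simpa [changeLevel_def] using congrArg Units.val hf.symm

lemma changeLevel_mul_changeLevel_apply_intCast (φ : DirichletCharacter R a)
    (ψ : DirichletCharacter R b) (k : ℤ) :
    (changeLevel (dvd_mul_right a b) φ * changeLevel (dvd_mul_left b a) ψ) k = φ k * ψ k := by
  nontriviality R
  by_cases hk : IsCoprime k (a * b : ℕ)
  · rw [MulChar.mul_apply, changeLevel_eq_cast_of_dvd' _ _ hk, changeLevel_eq_cast_of_dvd' _ _ hk]
  · have hk' : ¬ IsCoprime k a ∨ ¬ IsCoprime k b := by
      rwa [← not_and_or, ← IsCoprime.mul_right_iff, ← Nat.cast_mul]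
    rw [(apply_eq_zero_iff _ k).2 hk]
    rcases hk' with hka | hkb
    · rw [(apply_eq_zero_iff φ k).2 hka, zero_mul]
    · rw [(apply_eq_zero_iff ψ k).2 hkb, mul_zero]

variable [NeZero a] [NeZero b] {φ : DirichletCharacter R a} {ψ : DirichletCharacter R b}

lemma eq_one_of_changeLevel_mul_changeLevel_eq_one (hab : a.Coprime b)
    (h : changeLevel (dvd_mul_right a b) φ * changeLevel (dvd_mul_left b a) ψ = 1) :
    φ = 1 ∧ ψ = 1 := by
  have conductor_eq : φ.conductor = ψ.conductor := by
    rw [← conductor_changeLevel φ (dvd_mul_right a b), eq_inv_of_mul_eq_one_left h, conductor_inv,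
      conductor_changeLevel]
  have conductor_eq_one : φ.conductor = 1 :=
    Nat.eq_one_of_dvd_coprimes hab φ.conductor_dvd_level (conductor_eq ▸ ψ.conductor_dvd_level)
  exact ⟨φ.eq_one_iff_conductor_eq_one.2 conductor_eq_one,
    ψ.eq_one_iff_conductor_eq_one.2 (conductor_eq ▸ conductor_eq_one)⟩

lemma isPrimitive_of_isPrimitive_changeLevel_mul_changeLevel
    (h : (changeLevel (dvd_mul_right a b) φ * changeLevel (dvd_mul_left b a) ψ).IsPrimitive) :
    φ.IsPrimitive ∧ ψ.IsPrimitive := by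
  have level_dvd : a * b ∣ φ.conductor * ψ.conductor := by
    have := conductor_mul_dvd_lcm_conductor (changeLevel (dvd_mul_right a b) φ)
      (changeLevel (dvd_mul_left b a) ψ)
    rw [(isPrimitive_def _).1 h, conductor_changeLevel, conductor_changeLevel] at this
    exact this.trans (Nat.lcm_dvd_mul _ _)
  constructor
  · refine Nat.dvd_antisymm φ.conductor_dvd_level ?_
    exact Nat.dvd_of_mul_dvd_mul_right (NeZero.pos b)
      (level_dvd.trans (Nat.mul_dvd_mul_left _ ψ.conductor_dvd_level))
  · refine Nat.dvd_antisymm ψ.conductor_dvd_level ?_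
    exact Nat.dvd_of_mul_dvd_mul_left (NeZero.pos a)
      (level_dvd.trans (Nat.mul_dvd_mul_right φ.conductor_dvd_level _))

end Coprime

section PrimePower

variable {R : Type*} [CommMonoidWithZero R] {n : ℕ}

lemma exists_apply_ne_one_of_isPrimitive [NeZero n] {χ : DirichletCharacter R n}
    (hχ : χ.IsPrimitive) {d : ℕ} (hd : d ∣ n) (hdn : d < n) :
    ∃ u : (ZMod n)ˣ, (d : ZMod n) ∣ u - 1 ∧ χ u ≠ 1 := by
  by_contra! H
  have factorsThrough : χ.FactorsThrough d := by
    rw [factorsThrough_iff_ker_unitsMap hd]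
    intro u hu
    obtain ⟨x, hx⟩ := intCast_surjective (u : ZMod n)
    have hxd : (d : ℤ) ∣ x - 1 := by
      rw [MonoidHom.mem_ker, Units.ext_iff, unitsMap_val, ← hx, cast_intCast hd] at hu
      rw [← intCast_zmod_eq_zero_iff_dvd, Int.cast_sub, hu]
      simp
    have hud : (d : ZMod n) ∣ u - 1 := by
      simpa [hx] using (Int.castRingHom (ZMod n)).map_dvd hxd
    rw [MonoidHom.mem_ker, Units.ext_iff, MulChar.coe_toUnitHom, H u hud, Units.val_one]
  exact hdn.not_ge (hχ.ge.trans (Nat.sInf_le factorsThrough))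

lemma ne_one_of_isPrimitive (hn : 1 < n) {χ : DirichletCharacter R n} (hχ : χ.IsPrimitive) :
    χ ≠ 1 := by
  have : NeZero n := ⟨by omega⟩
  rintro rfl
  exact hn.ne (conductor_one.symm.trans hχ)

lemma odd_prime_pow_exponent_eq_one_of_isPrimitive {p k : ℕ} (hp : p.Prime) (hp₂ : p ≠ 2)
    (hk : k ≠ 0) {χ : DirichletCharacter R (p ^ k)} (hχ : χ ^ 2 = 1) (hprim : χ.IsPrimitive) :
    k = 1 := by
  have : NeZero p := ⟨hp.ne_zero⟩
  obtain ⟨k, rfl⟩ := Nat.exists_eq_succ_of_ne_zero hk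
  by_contra! hk₁
  obtain ⟨u, hu, hχu⟩ := exists_apply_ne_one_of_isPrimitive hprim (d := p) (dvd_pow_self p hk)
    (lt_self_pow₀ hp.one_lt (by omega))
  have hu_pow : u ^ p ^ k = 1 := by
    have := dvd_sub_pow_of_dvd_sub hu k
    rw [← Nat.cast_pow, natCast_self, zero_dvd_iff, one_pow, sub_eq_zero] at this
    exact Units.ext (by simpa using this)
  obtain ⟨m, hm⟩ : Odd (p ^ k) := (hp.odd_of_ne_two hp₂).pow
  have hχ_pow : χ ^ p ^ k = χ := by rw [hm, pow_succ χ, pow_mul χ, hχ, one_pow, one_mul]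
  apply hχu
  rw [← hχ_pow, MulChar.pow_apply_coe, ← map_pow, ← Units.val_pow_eq_pow_val, hu_pow,
    Units.val_one, map_one]

lemma two_pow_exponent_eq_two_or_three_of_isPrimitive {k : ℕ} (hk : k ≠ 0)
    {χ : DirichletCharacter R (2 ^ k)} (hχ : χ ^ 2 = 1) (hprim : χ.IsPrimitive) :
    k = 2 ∨ k = 3 := by
  have hk₁ : k ≠ 1 := by
    rintro rfl
    exact ne_one_of_isPrimitive (by norm_num) hprim
      (MulChar.ext fun u => by rw [Subsingleton.elim (α := (ZMod 2)ˣ) u 1]; simp)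
  by_contra! hk₂₃
  obtain ⟨m, rfl⟩ := Nat.exists_eq_add_of_le' (show 4 ≤ k by omega)
  obtain ⟨u, ⟨t, ht⟩, hχu⟩ := exists_apply_ne_one_of_isPrimitive hprim (d := 2 ^ (m + 3))
    (pow_dvd_pow 2 (by omega)) (Nat.pow_lt_pow_right one_lt_two (by omega))
  have two_pow_eq_zero : (2 : ZMod (2 ^ (m + 4))) ^ (m + 4) = 0 := by
    exact_mod_cast natCast_self (2 ^ (m + 4))
  have u_eq_sq : (u : ZMod (2 ^ (m + 4))) = (1 + 2 ^ (m + 2) * t) ^ 2 := by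
    push_cast at ht
    linear_combination ht - 2 ^ m * t ^ 2 * two_pow_eq_zero
  apply hχu
  have hroot : IsUnit (1 + 2 ^ (m + 2) * t) := by
    rw [← isUnit_pow_iff two_ne_zero, ← u_eq_sq]
    exact u.isUnit
  rw [u_eq_sq, map_pow, ← MulChar.pow_apply' _ two_ne_zero, hχ, MulChar.one_apply hroot]

lemma dirichletCharacter_eight_ext {χ ψ : DirichletCharacter R 8} (h_neg_one : χ (-1) = ψ (-1))
    (h_five : χ 5 = ψ 5) : χ = ψ := by
  have units_eq : ∀ u : (ZMod 8)ˣ, (u : ZMod 8) = 1 ∨ (u : ZMod 8) = -1 ∨ (u : ZMod 8) = 5 ∨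
      (u : ZMod 8) = -1 * 5 := by decide
  refine MulChar.ext fun u => ?_
  rcases units_eq u with h | h | h | h <;> rw [h]
  · rw [map_one, map_one]
  · exact h_neg_one
  · exact h_five
  · rw [map_mul, map_mul, h_neg_one, h_five]

end PrimePower

section PrimitiveQuadratic

variable {R : Type*} [CommRing R] [NoZeroDivisors R]

lemma eq_ringHomComp_χ₄_of_isPrimitive {χ : DirichletCharacter R 4} (hχ : χ ^ 2 = 1)
    (hprim : χ.IsPrimitive) : χ = χ₄.ringHomComp (Int.castRingHom R) := by
  have : IsCyclic (ZMod 4)ˣ := isCyclic_units_four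
  have hχ₄ : χ₄ ≠ 1 := MulChar.ne_one_iff.2 ⟨-1, by decide⟩
  exact mulChar_eq_ringHomComp_of_isCyclic hχ (ne_one_of_isPrimitive (by norm_num) hprim)
    isQuadratic_χ₄.sq_eq_one hχ₄

lemma apply_five_eq_neg_one_of_isPrimitive {χ : DirichletCharacter R 8} (hχ : χ ^ 2 = 1)
    (hprim : χ.IsPrimitive) : χ 5 = -1 := by
  obtain ⟨u, hu, hχu⟩ := exists_apply_ne_one_of_isPrimitive hprim (d := 4)
    (by norm_num) (by norm_num)
  have u_eq : ∀ v : (ZMod 8)ˣ, (4 : ZMod 8) ∣ v - 1 → v = 1 ∨ (v : ZMod 8) = 5 := by decide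
  rcases u_eq u hu with rfl | h5
  · simp at hχu
  · rw [← h5]
    exact mulChar_apply_eq_neg_one hχ hχu

lemma eq_ringHomComp_χ₈_or_χ₈'_of_isPrimitive {χ : DirichletCharacter R 8} (hχ : χ ^ 2 = 1)
    (hprim : χ.IsPrimitive) :
    χ = χ₈.ringHomComp (Int.castRingHom R) ∨ χ = χ₈'.ringHomComp (Int.castRingHom R) := by
  have h_five := apply_five_eq_neg_one_of_isPrimitive hχ hprim
  rcases χ.even_or_odd with h_even | h_odd
  · refine .inl (dirichletCharacter_eight_ext ?_ ?_)
    · rw [h_even, MulChar.ringHomComp_apply, show χ₈ (-1) = 1 by decide, map_one]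
    · rw [h_five, MulChar.ringHomComp_apply, show χ₈ 5 = -1 by decide, map_neg, map_one]
  · refine .inr (dirichletCharacter_eight_ext ?_ ?_)
    · rw [h_odd, MulChar.ringHomComp_apply, show χ₈' (-1) = -1 by decide, map_neg, map_one]
    · rw [h_five, MulChar.ringHomComp_apply, show χ₈' 5 = -1 by decide, map_neg, map_one]

lemma eq_ringHomComp_quadraticChar_of_isPrimitive {p : ℕ} [Fact p.Prime] (hp₂ : p ≠ 2)
    {χ : DirichletCharacter R p} (hχ : χ ^ 2 = 1) (hprim : χ.IsPrimitive) :
    χ = (quadraticChar (ZMod p)).ringHomComp (Int.castRingHom R) :=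
  mulChar_eq_ringHomComp_of_isCyclic hχ (ne_one_of_isPrimitive (Fact.out : p.Prime).one_lt hprim)
    (quadraticChar_isQuadratic _).sq_eq_one (quadraticChar_ne_one (by rwa [ringChar_zmod_n]))

end PrimitiveQuadratic

namespace IsFundamentalDiscriminant

variable {Δ₁ Δ₂ : ℤ}

lemma ne_neg_one (h : IsFundamentalDiscriminant Δ₁) : Δ₁ ≠ -1 := by
  rcases h.2 with ⟨h_mod, -⟩ | ⟨m, rfl, -, -⟩ <;> omega

lemma mul (h₁ : IsFundamentalDiscriminant Δ₁) (h₂ : IsFundamentalDiscriminant Δ₂)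
    (hco : IsCoprime Δ₁ Δ₂) : IsFundamentalDiscriminant (Δ₁ * Δ₂) := by
  have mul_ne_one : Δ₁ * Δ₂ ≠ 1 := fun h =>
    (Int.mul_eq_one_iff_eq_one_or_neg_one.1 h).elim (fun h => h₁.1 h.1)
      (fun h => h₁.ne_neg_one h.1)
  refine ⟨mul_ne_one, ?_⟩
  rcases h₁.2 with ⟨hmod₁, hsq₁⟩ | ⟨m₁, rfl, hsq₁, hmod₁⟩ <;>
    rcases h₂.2 with ⟨hmod₂, hsq₂⟩ | ⟨m₂, rfl, hsq₂, hmod₂⟩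
  · exact .inl ⟨by simp [Int.mul_emod, hmod₁, hmod₂],
      squarefree_mul_iff.2 ⟨hco.isRelPrime, hsq₁, hsq₂⟩⟩
  · refine .inr ⟨Δ₁ * m₂, by ring, squarefree_mul_iff.2 ⟨?_, hsq₁, hsq₂⟩, ?_⟩
    · exact hco.of_mul_right_right.isRelPrime
    · rwa [Int.mul_emod, hmod₁, one_mul, Int.emod_emod]
  · refine .inr ⟨m₁ * Δ₂, by ring, squarefree_mul_iff.2 ⟨?_, hsq₁, hsq₂⟩, ?_⟩
    · exact hco.of_mul_left_right.isRelPrime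
    · rwa [Int.mul_emod, hmod₂, mul_one, Int.emod_emod]
  · have : IsUnit (4 : ℤ) := hco.of_mul_left_left.isUnit_of_dvd' dvd_rfl (dvd_mul_right 4 m₂)
    exact absurd this (by decide)

end IsFundamentalDiscriminant

section ReciprocityDiscriminant

-- For odd `a`, the integer `χ₄ a * a` is the classical `a* = (-1) ^ ((a - 1) / 2) * a`.
variable {a : ℕ}

lemma χ₄_mul_self_emod_four (ha : Odd a) : (χ₄ a * a : ℤ) % 4 = 1 := by
  rcases Nat.odd_mod_four_iff.1 (Nat.odd_iff.1 ha) with h | h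
  · rw [χ₄_nat_one_mod_four h]; omega
  · rw [χ₄_nat_three_mod_four h]; omega

lemma natAbs_χ₄_mul_self (ha : Odd a) : (χ₄ a * a : ℤ).natAbs = a := by
  rcases Nat.odd_mod_four_iff.1 (Nat.odd_iff.1 ha) with h | h
  · rw [χ₄_nat_one_mod_four h]; omega
  · rw [χ₄_nat_three_mod_four h]; omega

lemma isFundamentalDiscriminant_χ₄_mul_self (ha : Odd a) (ha₁ : a ≠ 1)
    (hsq : Squarefree a) : IsFundamentalDiscriminant (χ₄ a * a) := by
  have hnatAbs := natAbs_χ₄_mul_self ha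
  refine ⟨fun h => ha₁ ?_, .inl ⟨χ₄_mul_self_emod_four ha, ?_⟩⟩
  · rw [← hnatAbs, h, Int.natAbs_one]
  · rwa [← Int.squarefree_natAbs, hnatAbs]

lemma jacobiSym_χ₄_mul_self {b : ℕ} (ha : Odd a) (hb : Odd b) : J(χ₄ a * a | b) = J(b | a) := by
  rw [jacobiSym.mul_left, jacobiSym.quadratic_reciprocity' ha hb, qrSign.symm hb ha, ← qrSign,
    ← mul_assoc, ← sq, qrSign.sq_eq_one ha hb, one_mul]

end ReciprocityDiscriminant

/-- `χ` is the character `k ↦ (Δ/k)` attached to the fundamental discriminant `Δ`, of level `|Δ|`.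
Only odd `k` are tested, since the Jacobi symbol is meaningful only for odd denominators. -/
structure HasDiscriminant {R : Type*} [CommRing R] {n : ℕ} (χ : DirichletCharacter R n) (Δ : ℤ) :
    Prop where
  isFundamentalDiscriminant : IsFundamentalDiscriminant Δ
  natAbs_eq : Δ.natAbs = n
  apply_eq_jacobiSym (k : ℕ) (hk : Odd k) : χ k = J(Δ | k)

namespace HasDiscriminant

lemma ringHomComp_intCast {n : ℕ} {χ : DirichletCharacter ℤ n} {Δ : ℤ}
    (h : HasDiscriminant χ Δ) (R : Type*) [CommRing R] :
    HasDiscriminant (χ.ringHomComp (Int.castRingHom R)) Δ where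
  isFundamentalDiscriminant := h.isFundamentalDiscriminant
  natAbs_eq := h.natAbs_eq
  apply_eq_jacobiSym k hk := by
    rw [MulChar.ringHomComp_apply, h.apply_eq_jacobiSym k hk, Int.cast_id, eq_intCast]

lemma changeLevel_mul_changeLevel {R : Type*} [CommRing R] {a b : ℕ} (hab : a.Coprime b)
    {φ : DirichletCharacter R a} {ψ : DirichletCharacter R b} {Δ₁ Δ₂ : ℤ}
    (hφ : HasDiscriminant φ Δ₁) (hψ : HasDiscriminant ψ Δ₂) :
    HasDiscriminant (changeLevel (dvd_mul_right a b) φ * changeLevel (dvd_mul_left b a) ψ)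
      (Δ₁ * Δ₂) where
  isFundamentalDiscriminant := by
    refine hφ.isFundamentalDiscriminant.mul hψ.isFundamentalDiscriminant ?_
    rwa [Int.isCoprime_iff_nat_coprime, hφ.natAbs_eq, hψ.natAbs_eq]
  natAbs_eq := by rw [Int.natAbs_mul, hφ.natAbs_eq, hψ.natAbs_eq]
  apply_eq_jacobiSym k hk := by
    have := changeLevel_mul_changeLevel_apply_intCast φ ψ k
    rw [Int.cast_natCast, Int.cast_natCast, Int.cast_natCast] at this
    rw [this, hφ.apply_eq_jacobiSym k hk, hψ.apply_eq_jacobiSym k hk, jacobiSym.mul_left,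
      Int.cast_mul]

end HasDiscriminant

lemma hasDiscriminant_χ₄ : HasDiscriminant χ₄ (-4) where
  isFundamentalDiscriminant :=
    ⟨by norm_num, .inr ⟨-1, by norm_num, isUnit_one.neg.squarefree, by norm_num⟩⟩
  natAbs_eq := rfl
  apply_eq_jacobiSym k hk := by
    rw [Int.cast_id, jacobiSym.neg _ hk, jacobiSym.at_four hk, mul_one]

lemma hasDiscriminant_χ₈ : HasDiscriminant χ₈ 8 where
  isFundamentalDiscriminant :=
    ⟨by norm_num, .inr ⟨2, by norm_num, Int.prime_two.squarefree, by norm_num⟩⟩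
  natAbs_eq := rfl
  apply_eq_jacobiSym k hk := by
    rw [show (8 : ℤ) = 4 * 2 by norm_num, Int.cast_id, jacobiSym.mul_left, jacobiSym.at_four hk,
      jacobiSym.at_two hk, one_mul]

lemma hasDiscriminant_χ₈' : HasDiscriminant χ₈' (-8) where
  isFundamentalDiscriminant :=
    ⟨by norm_num, .inr ⟨-2, by norm_num, Int.prime_two.neg.squarefree, by norm_num⟩⟩
  natAbs_eq := rfl
  apply_eq_jacobiSym k hk := by
    rw [show (-8 : ℤ) = 4 * -2 by norm_num, Int.cast_id, jacobiSym.mul_left, jacobiSym.at_four hk,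
      jacobiSym.at_neg_two hk, one_mul]

lemma hasDiscriminant_quadraticChar {p : ℕ} [Fact p.Prime] (hp₂ : p ≠ 2) :
    HasDiscriminant (n := p) (quadraticChar (ZMod p)) (χ₄ p * p) := by
  have hp : p.Prime := Fact.out
  have hp_odd := hp.odd_of_ne_two hp₂
  refine ⟨isFundamentalDiscriminant_χ₄_mul_self hp_odd hp.ne_one hp.prime.squarefree,
    natAbs_χ₄_mul_self hp_odd, fun k hk => ?_⟩
  rw [Int.cast_id, jacobiSym_χ₄_mul_self hp_odd hk, ← jacobiSym.legendreSym.to_jacobiSym,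
    legendreSym, Int.cast_natCast]

lemma exists_hasDiscriminant_of_isPrimitive_prime_pow {R : Type*} [CommRing R] [NoZeroDivisors R]
    {p k : ℕ} (hp : p.Prime) (hk : k ≠ 0) (χ : DirichletCharacter R (p ^ k)) (hχ : χ ^ 2 = 1)
    (hprim : χ.IsPrimitive) : ∃ Δ : ℤ, HasDiscriminant χ Δ := by
  rcases eq_or_ne p 2 with rfl | hp₂
  · rcases two_pow_exponent_eq_two_or_three_of_isPrimitive hk hχ hprim with rfl | rfl
    · obtain rfl := eq_ringHomComp_χ₄_of_isPrimitive hχ hprim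
      exact ⟨-4, hasDiscriminant_χ₄.ringHomComp_intCast R⟩
    · rcases eq_ringHomComp_χ₈_or_χ₈'_of_isPrimitive hχ hprim with rfl | rfl
      · exact ⟨8, hasDiscriminant_χ₈.ringHomComp_intCast R⟩
      · exact ⟨-8, hasDiscriminant_χ₈'.ringHomComp_intCast R⟩
  · have : Fact p.Prime := ⟨hp⟩
    obtain rfl := odd_prime_pow_exponent_eq_one_of_isPrimitive hp hp₂ hk hχ hprim
    revert χ
    rw [pow_one]
    intro χ hχ hprim
    obtain rfl := eq_ringHomComp_quadraticChar_of_isPrimitive hp₂ hχ hprim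
    exact ⟨_, (hasDiscriminant_quadraticChar hp₂).ringHomComp_intCast R⟩

theorem dirichlets_lemma_general {R : Type*} [CommRing R] [NoZeroDivisors R] {n : ℕ} (hn : 1 < n)
    (χ : DirichletCharacter R n) (hχ : χ ^ 2 = 1) (hprim : χ.IsPrimitive) :
    ∃ Δ : ℤ, HasDiscriminant χ Δ := by
  induction n using Nat.recOnPosPrimePosCoprime with
  | zero | one => omega
  | prime_pow p k hp hk =>
    exact exists_hasDiscriminant_of_isPrimitive_prime_pow hp hk.ne' χ hχ hprim
  | coprime a b ha hb hab iha ihb =>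
    have : NeZero a := ⟨by omega⟩
    have : NeZero b := ⟨by omega⟩
    obtain ⟨φ, ψ, rfl⟩ := exists_eq_changeLevel_mul_changeLevel hab χ
    obtain ⟨hφ, hψ⟩ : φ ^ 2 = 1 ∧ ψ ^ 2 = 1 :=
      eq_one_of_changeLevel_mul_changeLevel_eq_one hab (by rw [map_pow, map_pow, ← mul_pow, hχ])
    obtain ⟨hφ_prim, hψ_prim⟩ := isPrimitive_of_isPrimitive_changeLevel_mul_changeLevel hprim
    obtain ⟨Δ₁, hΔ₁⟩ := iha ha φ hφ hφ_prim
    obtain ⟨Δ₂, hΔ₂⟩ := ihb hb ψ hψ hψ_prim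
    exact ⟨Δ₁ * Δ₂, hΔ₁.changeLevel_mul_changeLevel hab hΔ₂⟩

/-- (Dirichlet's Lemma) Let `χ` be a primitive quadratic Dirichlet character modulo `n > 1`
(i.e. `χ` is nontrivial, `χ²` is the trivial character, and `χ` is primitive). Then there
exists a fundamental discriminant `Δ` with `|Δ| = n` such that `χ(p)` equals the Jacobi
symbol `(Δ/p)` for every odd prime `p` not dividing `2Δ`. -/
theorem dirichlets_lemma
    (n : ℕ) (hn : 1 < n) (χ : DirichletCharacter ℤ n)
    (hχ_nontriv : χ ≠ 1) (hχ_quad : χ ^ 2 = 1) (hχ_prim : χ.IsPrimitive) :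
    ∃ Δ : ℤ, IsFundamentalDiscriminant Δ ∧ Δ.natAbs = n ∧
      ∀ p : ℕ, p.Prime → Odd p → ¬ ((p : ℤ) ∣ 2 * Δ) →
        χ ((p : ℕ) : ZMod n) = jacobiSym Δ p := by
  obtain ⟨Δ, hΔ⟩ := dirichlets_lemma_general hn χ hχ_quad hχ_prim
  exact ⟨Δ, hΔ.isFundamentalDiscriminant, hΔ.natAbs_eq, fun p _ hp _ => hΔ.apply_eq_jacobiSym p hp⟩
end
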